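/- arXiv:2010.13208 — 12 statements merged into one kernel-verified Lean document; each statement's English description precedes it below -/
import Mathlib

section
/- Let 𝒞 be an abelian category and let 𝒜 be a deflation-closed full additive subcategory of 𝒞. Then for every short exact sequence 0 → X → Y →^g Z → 0 in 𝒞 with Y and Z in 𝒜 and every morphism f : A → Z with A in 𝒜, the pullback of g along f lies in 𝒜. (This is the abelian-category case of the statement that a deflation-closed subcategory inherits a deflation-exact structure.) -/
open CategoryTheory CategoryTheory.Limits ZeroObject

universe v u

variable {C : Type u} [Category.{v} C] [Abelian C]

/-- A full additive subcategory of `C`, given as a predicate on objects: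
closed under isomorphisms, containing the zero object, closed under binary biproducts. -/
structure IsAdditiveClosed (𝒜 : C → Prop) : Prop where
  iso : ∀ {X Y : C}, (X ≅ Y) → 𝒜 X → 𝒜 Y
  zero : 𝒜 0
  biprod : ∀ {X Y : C}, 𝒜 X → 𝒜 Y → 𝒜 (X ⊞ Y)

/-- `𝒜` is deflation-closed: for every short exact sequence `0 → X → Y → Z → 0`
with `Y, Z ∈ 𝒜`, also `X ∈ 𝒜`. -/
def DeflationClosed (𝒜 : C → Prop) : Prop :=
  ∀ (S : ShortComplex C), S.ShortExact → 𝒜 S.X₂ → 𝒜 S.X₃ → 𝒜 S.X₁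

/-- Axiom (PR2): every object of `C` admits an epimorphism from an object of `𝒜`. -/
def PR2 (𝒜 : C → Prop) : Prop :=
  ∀ E : C, ∃ (A : C) (f : A ⟶ E), 𝒜 A ∧ Epi f

/-- A deflation-closed full additive subcategory of an abelian category is closed under
pullbacks of the epimorphism of a short exact sequence along morphisms from objects of `𝒜`. -/
theorem deflationClosed_pullback_mem
    (𝒜 : C → Prop) (hadd : IsAdditiveClosed 𝒜) (hdef : DeflationClosed 𝒜)
    {X Y Z : C} (i : X ⟶ Y) (g : Y ⟶ Z) (w : i ≫ g = 0)
    (hse : (ShortComplex.mk i g w).ShortExact)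
    (hY : 𝒜 Y) (hZ : 𝒜 Z)
    {A : C} (f : A ⟶ Z) (hA : 𝒜 A) :
    𝒜 (pullback g f) := by
  haveI : Epi g := hse.epi_g
  haveI : Epi (biprod.desc g (-f)) := by
    haveI : Epi (biprod.inl ≫ biprod.desc g (-f)) := by
      rw [biprod.inl_desc]; infer_instance
    exact epi_of_epi biprod.inl _
  have hk : biprod.lift (pullback.fst g f) (pullback.snd g f) ≫ biprod.desc g (-f) = 0 := by
    simp [biprod.lift_desc, pullback.condition]
  have hl := Abelian.PullbackToBiproductIsKernel.isLimitPullbackToBiproduct g f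
  have hS : (ShortComplex.mk _ _ hk).ShortExact :=
    { exact := ShortComplex.exact_of_f_is_kernel _ hl
      mono_f := mono_of_isLimit_fork hl
      epi_g := by assumption }
  exact hdef _ hS (hadd.biprod hY hA) hZ
end

section
/- Let 𝒞 be an abelian category and let 𝒜 be a deflation-closed full additive subcategory of 𝒞. Let A• be a bounded-above cochain complex (A^k = 0 for all k greater than some bound) all of whose terms lie in 𝒜. If A• is acyclic in 𝒞, then for every n the kernel of the differential d^n : A^n → A^{n+1} (equivalently, the image of every differential) lies in 𝒜. -/
open CategoryTheory CategoryTheory.Limits ZeroObject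

universe v u

variable {C : Type u} [Category.{v} C] [Abelian C]

/-- The corestriction of a differential of an acyclic complex to the next kernel is epi. -/
theorem epi_lift_of_acyclic (A : CochainComplex C ℤ) (hacy : ∀ k : ℤ, A.ExactAt k) (n : ℤ) :
    Epi (kernel.lift (A.d (n + 1) (n + 1 + 1)) (A.d n (n + 1)) (A.d_comp_d _ _ _)) := by
  have h := (A.exactAt_iff' n (n + 1) (n + 1 + 1) (by simp) (by simp)).1 (hacy (n + 1))
  exact h.epi_kernelLift

theorem kernel_mem_aux
    (𝒜 : C → Prop) (hadd : IsAdditiveClosed 𝒜) (hdef : DeflationClosed 𝒜)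
    (A : CochainComplex C ℤ) (b : ℤ) (hb : ∀ k : ℤ, b < k → IsZero (A.X k))
    (hterms : ∀ k : ℤ, 𝒜 (A.X k)) (hacy : ∀ k : ℤ, A.ExactAt k) (m : ℕ) :
    ∀ n : ℤ, b < n + m → 𝒜 (kernel (A.d n (n + 1))) := by
  induction m with
  | zero =>
    intro n hn
    have hz : IsZero (A.X n) := hb n (by simpa using hn)
    have hk : IsZero (kernel (A.d n (n + 1))) := IsZero.of_mono (kernel.ι _) hz
    exact hadd.iso ((isZero_zero C).iso hk) hadd.zero
  | succ m ih =>
    intro n hn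
    have h1 := ih (n + 1) (by push_cast at hn; omega)
    have he := epi_lift_of_acyclic A hacy n
    let p := kernel.lift (A.d (n + 1) (n + 1 + 1)) (A.d n (n + 1)) (A.d_comp_d _ _ _)
    have hp : p ≫ kernel.ι _ = A.d n (n + 1) := kernel.lift_ι _ _ _
    have hS : (ShortComplex.mk (kernel.ι p) p (kernel.condition p)).ShortExact :=
      { exact := ShortComplex.kernelSequence_exact p
        mono_f := inferInstanceAs (Mono (kernel.ι p))
        epi_g := he }
    have h2 : 𝒜 (kernel p) := hdef _ hS (hterms n) h1
    exact hadd.iso ((kernelCompMono p (kernel.ι _)).symm ≪≫ kernelIsoOfEq hp) h2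

/-- If `𝒜` is deflation-closed and `A•` is a bounded-above acyclic cochain complex all of
whose terms lie in `𝒜`, then every kernel of a differential of `A•` lies in `𝒜`. -/
theorem kernel_mem_of_acyclic_boundedAbove
    (𝒜 : C → Prop) (hadd : IsAdditiveClosed 𝒜) (hdef : DeflationClosed 𝒜)
    (A : CochainComplex C ℤ) (b : ℤ) (hb : ∀ k : ℤ, b < k → IsZero (A.X k))
    (hterms : ∀ k : ℤ, 𝒜 (A.X k)) (hacy : ∀ k : ℤ, A.ExactAt k) (n : ℤ) :
    𝒜 (kernel (A.d n (n + 1))) ∧ 𝒜 (image (A.d n (n + 1))) := by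
  have H : ∀ k : ℤ, 𝒜 (kernel (A.d k (k + 1))) := fun k =>
    kernel_mem_aux 𝒜 hadd hdef A b hb hterms hacy (b + 1 - k).toNat k (by omega)
  refine ⟨H n, ?_⟩
  have he := epi_lift_of_acyclic A hacy n
  have := strongEpi_of_epi
    (kernel.lift (A.d (n + 1) (n + 1 + 1)) (A.d n (n + 1)) (A.d_comp_d _ _ _))
  exact hadd.iso (image.isoStrongEpiMono _ (kernel.ι _) (kernel.lift_ι _ _ _)) (H (n + 1))
end

section
/- Let 𝒞 be an abelian category and let 𝒜 be a full additive subcategory satisfying (PR2). Then for every cochain complex E• with E^k = 0 for all k > b (for some integer b), there exist a cochain complex A• with A^k = 0 for all k > b and all terms A^k in 𝒜, and a chain map f : A• → E• which is a quasi-isomorphism. -/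
open CategoryTheory CategoryTheory.Limits ZeroObject

universe v u

variable {C : Type u} [Category.{v} C] [Abelian C]

namespace PR2Res

/-- State of the inductive construction in degree `n`. -/
structure St (E : ChainComplex C ℕ) (n : ℕ) where
  A : C
  Z : C
  i : Z ⟶ A
  f : A ⟶ E.X n

variable {𝒜 : C → Prop} (h : PR2 𝒜) (E : ChainComplex C ℕ)

noncomputable def cov (X : C) : C := (h X).choose

noncomputable def covπ (X : C) : cov h X ⟶ X := (h X).choose_spec.choose

lemma cov_mem (X : C) : 𝒜 (cov h X) := (h X).choose_spec.choose_spec.1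

instance (X : C) : Epi (covπ h X) := (h X).choose_spec.choose_spec.2

variable {E}

noncomputable abbrev P {n : ℕ} (s : St E n) : C := pullback (s.i ≫ s.f) (E.d (n + 1) n)

noncomputable def toZ₀ {n : ℕ} (s : St E n) : cov h (P s) ⟶ s.Z :=
  covπ h (P s) ≫ pullback.fst _ _

noncomputable def step {n : ℕ} (s : St E n) : St E (n + 1) where
  A := cov h (P s)
  Z := kernel (toZ₀ h s)
  i := kernel.ι (toZ₀ h s)
  f := covπ h (P s) ≫ pullback.snd _ _

section

variable {n : ℕ} (s : St E n)

noncomputable def q : (step h s).A ⟶ P s := covπ h (P s)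

instance : Epi (q h s) := inferInstanceAs (Epi (covπ h (P s)))

noncomputable def toZ : (step h s).A ⟶ s.Z := toZ₀ h s

lemma toZ_eq : toZ h s = q h s ≫ pullback.fst _ _ := rfl

lemma step_f : (step h s).f = q h s ≫ pullback.snd _ _ := rfl

lemma step_i_toZ : (step h s).i ≫ toZ h s = 0 := kernel.condition (toZ₀ h s)

lemma step_mono : Mono (step h s).i := equalizer.ι_mono (f := toZ₀ h s) (g := 0)

lemma step_fac {T : C} (x : T ⟶ (step h s).A) (hx : x ≫ toZ h s = 0) :
    ∃ z, z ≫ (step h s).i = x :=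
  ⟨kernel.lift (toZ₀ h s) x hx, kernel.lift_ι (toZ₀ h s) x hx⟩

noncomputable def dS : (step h s).A ⟶ s.A := toZ h s ≫ s.i

lemma dS_dS : dS h (step h s) ≫ dS h s = 0 := by
  simp only [dS, Category.assoc]
  rw [← Category.assoc (step h s).i, step_i_toZ, zero_comp, comp_zero]

lemma dS_f : (step h s).f ≫ E.d (n + 1) n = dS h s ≫ s.f := by
  rw [dS, toZ_eq, step_f]
  simp only [Category.assoc]
  rw [← pullback.condition]

lemma dS_lift {T : C} (z : T ⟶ s.Z) (y : T ⟶ E.X (n + 1))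
    (hzy : z ≫ s.i ≫ s.f = y ≫ E.d (n + 1) n) :
    ∃ (T' : C) (π : T' ⟶ T) (_ : Epi π) (x : T' ⟶ (step h s).A),
      π ≫ z ≫ s.i = x ≫ dS h s ∧ π ≫ y = x ≫ (step h s).f := by
  obtain ⟨T', π, hπ, x, hx⟩ := surjective_up_to_refinements_of_epi (q h s)
    (pullback.lift z y hzy)
  refine ⟨T', π, hπ, x, ?_, ?_⟩
  · have := congrArg (· ≫ pullback.fst _ _ ≫ s.i) hx
    simp only [Category.assoc, pullback.lift_fst_assoc] at this
    rw [this, dS, toZ_eq]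
    simp only [Category.assoc]
  · have := congrArg (· ≫ pullback.snd _ _) hx
    simp only [Category.assoc, pullback.lift_snd] at this
    rw [this, step_f]

lemma dS_fac [Mono s.i] {T : C} (x : T ⟶ (step h s).A) (hx : x ≫ dS h s = 0) :
    ∃ z, z ≫ (step h s).i = x := by
  apply step_fac
  rw [← cancel_mono s.i, zero_comp, Category.assoc]
  exact hx

end

variable (E)

noncomputable def st : (n : ℕ) → St E n
  | 0 => ⟨cov h (E.X 0), cov h (E.X 0), 𝟙 _, covπ h _⟩
  | n + 1 => step h (st n)

instance (n : ℕ) : Mono (st h E n).i := by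
  cases n
  · exact inferInstanceAs (Mono (𝟙 _))
  · exact step_mono h _

noncomputable def dd (n : ℕ) : (st h E (n + 1)).A ⟶ (st h E n).A := dS h (st h E n)

lemma dd_dd (n : ℕ) : dd h E (n + 1) ≫ dd h E n = 0 := dS_dS h (st h E n)

lemma dd_f (n : ℕ) : (st h E (n + 1)).f ≫ E.d (n + 1) n = dd h E n ≫ (st h E n).f :=
  dS_f h (st h E n)

lemma lift_P (n : ℕ) {T : C} (z : T ⟶ (st h E n).Z) (y : T ⟶ E.X (n + 1))
    (hzy : z ≫ (st h E n).i ≫ (st h E n).f = y ≫ E.d (n + 1) n) :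
    ∃ (T' : C) (π : T' ⟶ T) (_ : Epi π) (x : T' ⟶ (st h E (n + 1)).A),
      π ≫ z ≫ (st h E n).i = x ≫ dd h E n ∧ π ≫ y = x ≫ (st h E (n + 1)).f :=
  dS_lift h (st h E n) z y hzy

lemma fac_Z (n : ℕ) {T : C} (x : T ⟶ (st h E (n + 1)).A) (hx : x ≫ dd h E n = 0) :
    ∃ z, z ≫ (st h E (n + 1)).i = x :=
  dS_fac h (st h E n) x hx

noncomputable def cplx : ChainComplex C ℕ :=
  ChainComplex.of (fun n => (st h E n).A) (dd h E) (dd_dd h E)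

lemma cplx_d (n : ℕ) : (cplx h E).d (n + 1) n = dd h E n :=
  ChainComplex.of_d (fun n => (st h E n).A) (dd h E) n

noncomputable def map : cplx h E ⟶ E where
  f n := (st h E n).f
  comm' i j hij := by
    obtain rfl : j + 1 = i := hij
    rw [cplx_d]
    exact dd_f h E j

lemma map_f (n : ℕ) : (map h E).f n = (st h E n).f := rfl

lemma fac_Z' (n : ℕ) {T : C} (x : T ⟶ (st h E n).A)
    (hx : x ≫ (cplx h E).d n ((ComplexShape.down ℕ).next n) = 0) :
    ∃ z, z ≫ (st h E n).i = x := by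
  cases n with
  | zero => exact ⟨x, Category.comp_id _⟩
  | succ n =>
    apply fac_Z
    rw [ChainComplex.next_nat_succ] at hx
    rw [← cplx_d]
    exact hx

lemma quasiIso_map : QuasiIso (map h E) := by
  refine ⟨fun n => ?_⟩
  rw [quasiIsoAt_iff_isIso_homologyMap]
  have : Mono (HomologicalComplex.homologyMap (map h E) n) := by
    rw [HomologicalComplex.mono_homologyMap_iff_up_to_refinements _ (n + 1) n _
      (ChainComplex.prev ℕ n) rfl]
    intro T x hx y hy
    obtain ⟨z, hz⟩ := fac_Z' h E n x hx
    obtain ⟨T', π, hπ, w, hw, -⟩ := lift_P h E n z y (by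
      rw [← Category.assoc, hz]; exact hy)
    refine ⟨T', π, hπ, w, ?_⟩
    rw [cplx_d]
    exact (congrArg (π ≫ ·) hz).symm.trans hw
  have : Epi (HomologicalComplex.homologyMap (map h E) n) := by
    rw [HomologicalComplex.epi_homologyMap_iff_up_to_refinements _ (n + 1) n _
      (ChainComplex.prev ℕ n) rfl]
    intro T y hy
    cases n with
    | zero =>
      obtain ⟨T', π, hπ, x, hx⟩ := surjective_up_to_refinements_of_epi (covπ h (E.X 0)) y
      refine ⟨T', π, hπ, x, ?_, 0, ?_⟩
      · rw [(cplx h E).shape _ _ (by simp)]; exact comp_zero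
      · rw [zero_comp, add_zero]; exact hx
    | succ n =>
      rw [ChainComplex.next_nat_succ] at hy
      obtain ⟨T', π, hπ, x, hx, hx'⟩ := lift_P h E n 0 y (by rw [hy, zero_comp])
      refine ⟨T', π, hπ, x, ?_, 0, ?_⟩
      · rw [ChainComplex.next_nat_succ, cplx_d]
        rw [zero_comp, comp_zero] at hx
        exact hx.symm
      · rw [zero_comp, add_zero]; exact hx'
  exact isIso_of_mono_of_epi _

lemma mem (n : ℕ) : 𝒜 ((cplx h E).X n) := by
  cases n <;> exact cov_mem h _

end PR2Res

/-- If `𝒜` satisfies (PR2), then every bounded-above cochain complex admits a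
quasi-isomorphism from a bounded-above cochain complex with all terms in `𝒜`. -/
theorem exists_quasiIso_boundedAbove_of_PR2
    (𝒜 : C → Prop) (hadd : IsAdditiveClosed 𝒜) (hPR2 : PR2 𝒜)
    (E : CochainComplex C ℤ) (b : ℤ) (hb : ∀ k : ℤ, b < k → IsZero (E.X k)) :
    ∃ (A : CochainComplex C ℤ) (f : A ⟶ E),
      (∀ k : ℤ, b < k → IsZero (A.X k)) ∧ (∀ k : ℤ, 𝒜 (A.X k)) ∧ QuasiIso f := by
  let e := ComplexShape.embeddingUpIntLE b
  have hz : ∀ k : ℤ, (∀ i, e.f i ≠ k) → b < k := fun k hk =>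
    (ComplexShape.notMem_range_embeddingUpIntLE_iff b k).1 hk
  have hlift : e.HasLift (𝟙 (E.restriction e)) := by
    intro j hj i' hij'
    exact (hb i' (hz i' (hj.notMem hij'))).eq_of_src _ _
  let φ := e.liftExtend (𝟙 (E.restriction e)) hlift
  have hφ : ∀ k, IsIso (φ.f k) := by
    intro k
    by_cases hk : ∃ i, e.f i = k
    · obtain ⟨i, hi⟩ := hk
      rw [e.isIso_liftExtend_f_iff _ _ hi]
      exact inferInstanceAs (IsIso (𝟙 _))
    · have hk' : ∀ i, e.f i ≠ k := by simpa using hk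
      exact isIso_of_source_target_iso_zero _ (hb k (hz k hk')).isoZero
        ((E.restriction e).isZero_extend_X e k hk').isoZero
  have : IsIso φ := HomologicalComplex.Hom.isIso_of_components φ
  have := PR2Res.quasiIso_map hPR2 (E.restriction e)
  have : QuasiIso (HomologicalComplex.extendMap (PR2Res.map hPR2 (E.restriction e)) e) := by
    rwa [HomologicalComplex.quasiIso_extendMap_iff]
  refine ⟨(PR2Res.cplx hPR2 (E.restriction e)).extend e,
    HomologicalComplex.extendMap (PR2Res.map hPR2 (E.restriction e)) e ≫ inv φ, ?_, ?_,
    inferInstance⟩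
  · intro k hk
    exact HomologicalComplex.isZero_extend_X _ _ _
      ((ComplexShape.notMem_range_embeddingUpIntLE_iff b k).2 hk)
  · intro k
    by_cases hk : ∃ i, e.f i = k
    · obtain ⟨i, hi⟩ := hk
      exact hadd.iso (HomologicalComplex.extendXIso _ e hi).symm (PR2Res.mem hPR2 _ i)
    · have hk' : ∀ i, e.f i ≠ k := by simpa using hk
      exact hadd.iso (HomologicalComplex.isZero_extend_X _ e k hk').isoZero.symm hadd.zero
end

section
/- Let 𝒞 be an abelian category and let 𝒜 be a full additive subcategory satisfying (PR2) such that resdim_𝒜(E) < ∞ for every object E of 𝒞. Then for every bounded cochain complex E• there exist a bounded cochain complex A• with all terms in 𝒜 and a chain map f : A• → E• which is a quasi-isomorphism. -/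
open CategoryTheory CategoryTheory.Limits ZeroObject

universe v u

variable {C : Type u} [Category.{v} C] [Abelian C]

/-- `E` admits an exact sequence `0 → A⁻ⁿ → ⋯ → A⁰ → E → 0` with all `Aⁱ ∈ 𝒜`,
encoded as an everywhere-exact cochain complex with `E` placed in degree `1`. -/
def IsResolutionOfLength (𝒜 : C → Prop) (E : C) (n : ℕ) : Prop :=
  ∃ (R : CochainComplex C ℤ) (_ : R.X 1 ≅ E),
    (∀ k : ℤ, 1 < k → IsZero (R.X k)) ∧
    (∀ k : ℤ, k < -(n : ℤ) → IsZero (R.X k)) ∧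
    (∀ k : ℤ, -(n : ℤ) ≤ k → k ≤ 0 → 𝒜 (R.X k)) ∧
    (∀ k : ℤ, R.ExactAt k)

/-- The resolution dimension `resdim_𝒜 (E)`: the smallest `n` such that `E` admits an
`𝒜`-resolution of length `n`, and `∞` if no such `n` exists. -/
noncomputable def resdim (𝒜 : C → Prop) (E : C) : ℕ∞ :=
  sInf {m : ℕ∞ | ∃ n : ℕ, m = (n : ℕ∞) ∧ IsResolutionOfLength 𝒜 E n}

/-- `resdim_𝒜 (C)`: the supremum of `resdim_𝒜 (E)` over all objects `E`. -/
noncomputable def resdimCat (𝒜 : C → Prop) : ℕ∞ :=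
  ⨆ E : C, resdim 𝒜 E

namespace BddRes

open HomologicalComplex

lemma quasiIso_of_shortExact (S : ShortComplex (CochainComplex C ℤ)) (hS : S.ShortExact)
    (h : S.X₁.Acyclic) : QuasiIso S.g := by
  rw [quasiIso_iff]
  intro i
  rw [quasiIsoAt_iff_isIso_homologyMap]
  have h1 : IsZero (S.X₁.homology i) := (exactAt_iff_isZero_homology _ _).1 (h i)
  have h2 : IsZero (S.X₁.homology (i+1)) := (exactAt_iff_isZero_homology _ _).1 (h (i+1))
  have : Mono (homologyMap S.g i) :=
    (hS.homology_exact₂ i).mono_g (h1.eq_of_src _ _)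
  have : Epi (homologyMap S.g i) :=
    (hS.homology_exact₃ i (i+1) (by simp)).epi_f (h2.eq_of_tgt _ _)
  exact isIso_of_mono_of_epi _

lemma quasiIso_of_isPullback {P A D' D : CochainComplex C ℤ} {f : P ⟶ A} {g : P ⟶ D'}
    {q : A ⟶ D} {p : D' ⟶ D} (sq : IsPullback f g q p) [Epi p] [QuasiIso p] : QuasiIso f := by
  have hf : Epi f := by
    have := Abelian.epi_pullback_of_epi_g q p
    rw [← sq.isoPullback_hom_fst]
    infer_instance
  let S (X Y : CochainComplex C ℤ) (u : X ⟶ Y) : ShortComplex (CochainComplex C ℤ) :=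
    ShortComplex.mk (kernel.ι u) u (kernel.condition u)
  have hS (X Y : CochainComplex C ℤ) (u : X ⟶ Y) [Epi u] : (S X Y u).ShortExact :=
    { exact := ShortComplex.exact_of_f_is_kernel _ (kernelIsKernel u)
      mono_f := by dsimp [S]; infer_instance
      epi_g := by dsimp [S]; infer_instance }
  have hk : (kernel p).Acyclic := (hS _ _ p).acyclic_X₁ (by dsimp [S]; infer_instance)
  have := isIso_kernel_map_of_isPullback sq
  have hk' : (kernel f).Acyclic := fun i => 
    (hk i).of_iso (asIso (kernel.map _ _ _ _ sq.w)).symm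
  exact quasiIso_of_shortExact _ (hS _ _ f) hk'

lemma acyclic_double (X : C) (i₀ i₁ : ℤ) (hi : (ComplexShape.up ℤ).Rel i₀ i₁) (hne : i₀ ≠ i₁) :
    (double (𝟙 X) hi).Acyclic := by
  have hd : IsIso ((double (𝟙 X) hi).d i₀ i₁) := by
    rw [double_d _ _ hne]; infer_instance
  intro k
  by_cases h0 : k = i₀
  · subst h0
    rw [exactAt_iff' _ (k-1) k i₁ (by simp) (by simpa using hi)]
    rw [ShortComplex.exact_iff_mono]
    · exact (inferInstance : Mono ((double (𝟙 X) hi).d k i₁))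
    · exact double_d_eq_zero₁ _ hi _ _ hne
  by_cases h1 : k = i₁
  · subst h1
    rw [exactAt_iff' _ i₀ k (k+1) ((ComplexShape.up ℤ).prev_eq' hi) (by simp)]
    rw [ShortComplex.exact_iff_epi]
    · exact (inferInstance : Epi ((double (𝟙 X) hi).d i₀ k))
    · exact double_d_eq_zero₀ _ hi _ _ hne.symm
  · exact ShortComplex.exact_of_isZero_X₂ _ (isZero_double_X (𝟙 X) hi k h0 h1)

lemma exists_toDouble (A : CochainComplex C ℤ) (i₀ i₁ : ℤ)
    (hi : (ComplexShape.up ℤ).Rel i₀ i₁) (hne : i₀ ≠ i₁) :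
    ∃ q : A ⟶ double (𝟙 (A.X i₁)) hi,
      q.f i₀ = A.d i₀ i₁ ≫ (doubleXIso₀ _ hi).inv ∧ q.f i₁ = (doubleXIso₁ _ hi hne).inv := by
  refine ⟨{ f := fun k =>
      if hk₀ : k = i₀ then
        eqToHom (by rw [hk₀]) ≫ (A.d i₀ i₁ ≫ (doubleXIso₀ (𝟙 (A.X i₁)) hi).inv) ≫ eqToHom (by rw [hk₀])
      else if hk₁ : k = i₁ then
        eqToHom (congrArg A.X hk₁) ≫ (doubleXIso₁ (𝟙 (A.X i₁)) hi hne).inv ≫ eqToHom (by rw [hk₁])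
      else 0
            comm' := ?_ }, ?_, ?_⟩
  · intro k₀ k₁ hk
    by_cases h₁ : k₁ = i₁
    · subst h₁
      obtain rfl := (ComplexShape.up ℤ).prev_eq hk hi
      simp [hne.symm, double_d _ hi hne]
    · by_cases h₀ : k₁ = i₀
      · subst h₀
        rw [double_d_eq_zero₁ _ _ _ _ hne]
        simp
      · apply (isZero_double_X _ hi k₁ h₀ h₁).eq_of_tgt
  · simp
  · simp [hne.symm]

lemma step (A : CochainComplex C ℤ) (i₀ i₁ : ℤ) (hi : i₀ + 1 = i₁) (B : C) (p : B ⟶ A.X i₁)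
    [Epi p] : ∃ (P : CochainComplex C ℤ) (f : P ⟶ A), QuasiIso f ∧ Nonempty (P.X i₁ ≅ B) ∧
      (∀ k, k ≠ i₀ → k ≠ i₁ → Nonempty (P.X k ≅ A.X k)) ∧
      ∃ g : P.X i₀ ⟶ B, IsPullback (f.f i₀) g (A.d i₀ i₁) p := by
  have hi' : (ComplexShape.up ℤ).Rel i₀ i₁ := hi
  have hne : i₀ ≠ i₁ := by omega
  obtain ⟨q, hq0, hq1⟩ := exists_toDouble A i₀ i₁ hi' hne
  let π : double (𝟙 B) hi' ⟶ double (𝟙 (A.X i₁)) hi' :=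
    mkHomFromDouble hi' hne (p ≫ (doubleXIso₀ _ hi').inv) (p ≫ (doubleXIso₁ _ hi' hne).inv)
      (by simp [double_d _ hi' hne]) (fun k _ => by
        rw [double_d_eq_zero₀ _ _ _ _ hne.symm, comp_zero])
  have hπ0 : π.f i₀ = (doubleXIso₀ _ hi').hom ≫ p ≫ (doubleXIso₀ _ hi').inv := by simp [π]
  have hπ1 : π.f i₁ = (doubleXIso₁ _ hi' hne).hom ≫ p ≫ (doubleXIso₁ _ hi' hne).inv := by
    simp [π]
  have : ∀ k, Epi (π.f k) := by
    intro k
    by_cases h0 : k = i₀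
    · subst h0; rw [hπ0]; infer_instance
    by_cases h1 : k = i₁
    · subst h1; rw [hπ1]; infer_instance
    · exact ⟨fun _ _ _ => (isZero_double_X _ hi' k h0 h1).eq_of_src _ _⟩
  have : Epi π := epi_of_epi_f _ this
  have : QuasiIso π := by
    rw [quasiIso_iff]
    intro i
    rw [quasiIsoAt_iff_exactAt _ _ (acyclic_double B i₀ i₁ hi' hne i)]
    exact acyclic_double _ i₀ i₁ hi' hne i
  have sq := IsPullback.of_hasPullback q π
  have sqk (k : ℤ) := sq.map (HomologicalComplex.eval C (ComplexShape.up ℤ) k)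
  refine ⟨pullback q π, pullback.fst q π, quasiIso_of_isPullback sq, ?_, ?_, ?_⟩
  · have s : IsPullback ((pullback.fst q π).f i₁) ((pullback.snd q π).f i₁) (q.f i₁) (π.f i₁) := sqk i₁
    have : IsIso (q.f i₁) := by rw [hq1]; infer_instance
    have := s.isIso_snd_of_isIso
    exact ⟨asIso ((pullback.snd q π).f i₁) ≪≫ doubleXIso₁ _ hi' hne⟩
  · intro k h0 h1
    have s : IsPullback ((pullback.fst q π).f k) ((pullback.snd q π).f k) (q.f k) (π.f k) := sqk k
    have : IsIso (π.f k) := 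
      ⟨0, (isZero_double_X _ hi' k h0 h1).eq_of_src _ _,
        (isZero_double_X _ hi' k h0 h1).eq_of_src _ _⟩
    have := s.isIso_fst_of_isIso
    exact ⟨asIso ((pullback.fst q π).f k)⟩
  · have s : IsPullback ((pullback.fst q π).f i₀) ((pullback.snd q π).f i₀) (q.f i₀) (π.f i₀) := sqk i₀
    refine ⟨(pullback.snd q π).f i₀ ≫ (doubleXIso₀ _ hi').hom, ?_⟩
    refine s.of_iso (Iso.refl _) (Iso.refl _) (doubleXIso₀ _ hi') (doubleXIso₀ _ hi')
      (by simp) (by simp) (by simp [hq0]) (by simp [hπ0])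

variable {𝒜 : C → Prop}

lemma of_isZero (hadd : IsAdditiveClosed 𝒜) {X : C} (h : IsZero X) : 𝒜 X :=
  hadd.iso h.isoZero.symm hadd.zero

/-- Phase 1. -/
lemma phase1 (hadd : IsAdditiveClosed 𝒜) (hPR2 : PR2 𝒜)
    (E : CochainComplex C ℤ) (a b : ℤ)
    (hE : ∀ k : ℤ, (k < a ∨ b < k) → IsZero (E.X k)) (n : ℕ) :
    ∃ (A : CochainComplex C ℤ) (f : A ⟶ E), QuasiIso f ∧
      (∀ k, b < k → IsZero (A.X k)) ∧ (∀ k, k < a → k < b - n → IsZero (A.X k)) ∧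
      (∀ k, b - n < k → 𝒜 (A.X k)) := by
  induction n with
  | zero =>
    exact ⟨E, 𝟙 E, inferInstance, fun k hk => hE k (Or.inr hk), fun k hk _ => hE k (Or.inl hk),
      fun k hk => of_isZero hadd (hE k (Or.inr (by simpa using hk)))⟩
  | succ n ih =>
    obtain ⟨A, f, hf, h1, h2, h3⟩ := ih
    obtain ⟨B, p, hB, hp⟩ := hPR2 (A.X (b - n))
    obtain ⟨P, g, hg, ⟨e⟩, hk, -⟩ := step A (b - n - 1) (b - n) (by omega) B p
    refine ⟨P, g ≫ f, inferInstance, ?_, ?_, ?_⟩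
    · intro k hkb
      exact (h1 k hkb).of_iso (hk k (by omega) (by omega)).some
    · intro k hka hkb
      push_cast at hkb
      exact (h2 k hka (by omega)).of_iso (hk k (by omega) (by omega)).some
    · intro k hkb
      push_cast at hkb
      by_cases h : k = b - n
      · subst h; exact hadd.iso e.symm hB
      · exact hadd.iso (hk k (by omega) h).some.symm (h3 k (by omega))

/-- Phase 2. -/
lemma phase2 (hadd : IsAdditiveClosed 𝒜) (R : CochainComplex C ℤ) (hR : ∀ k, R.ExactAt k) (N : ℤ)
    (hN : ∀ k, k < N → IsZero (R.X k)) (n : ℕ) :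
    ∀ (j : ℤ) (_ : j < N + n) (_ : ∀ k, k < j → 𝒜 (R.X k))
      (A : CochainComplex C ℤ) (m b : ℤ) (_ : m ≤ b) (_ : Nonempty (A.X m ≅ R.cycles j))
      (_ : ∀ k, k < m → IsZero (A.X k)) (_ : ∀ k, b < k → IsZero (A.X k))
      (_ : ∀ k, m < k → 𝒜 (A.X k)),
    ∃ (P : CochainComplex C ℤ) (f : P ⟶ A) (a' : ℤ), QuasiIso f ∧
      (∀ k : ℤ, (k < a' ∨ b < k) → IsZero (P.X k)) ∧ (∀ k : ℤ, 𝒜 (P.X k)) := by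
  induction n with
  | zero =>
    intro j hj hRA A m b hm ⟨e⟩ h1 h2 h3
    have hz : IsZero (A.X m) :=
      (IsZero.of_mono (R.iCycles j) (hN j (by simpa using hj))).of_iso e
    refine ⟨A, 𝟙 A, m, inferInstance, ?_, ?_⟩
    · rintro k (hk | hk)
      exacts [h1 k hk, h2 k hk]
    · intro k
      rcases lt_trichotomy k m with h | rfl | h
      exacts [of_isZero hadd (h1 k h), of_isZero hadd hz, h3 k h]
  | succ n ih =>
    intro j hj hRA A m b hm ⟨e⟩ h1 h2 h3
    have hep : Epi (R.toCycles (j-1) j) := by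
      have := hR j
      rw [exactAt_iff' _ (j-1) j (j+1) (by simp) (by simp)] at this
      have := this.epi_toCycles
      rw [← R.toCycles_cyclesIsoSc'_hom (j-1) j (j+1) (by simp) (by simp)] at this
      exact (MorphismProperty.epimorphisms C).cancel_right_of_respectsIso _ _ |>.1 this
    obtain ⟨P, g, hg, ⟨e'⟩, hk, s, sq⟩ := step A (m - 1) m (by omega) (R.X (j-1))
      (R.toCycles (j-1) j ≫ e.inv)
    have e2 : P.X (m-1) ≅ R.cycles (j-1) := by
      have hz := h1 (m-1) (by omega)
      refine sq.isoIsPullback _ _ (IsPullback.of_isLimit' (fst := (0 : R.cycles (j-1) ⟶ _))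
        (snd := R.iCycles (j-1)) ⟨?_⟩ (PullbackCone.IsLimit.mk _
          (fun s => R.liftCycles s.snd j (by simp) ?_) ?_ ?_ ?_))
      · rw [zero_comp, ← cancel_mono e.hom, ← cancel_mono (R.iCycles j)]
        simp
      · have h := s.condition
        rw [hz.eq_of_tgt s.fst 0, zero_comp] at h
        have h' := h.symm =≫ (e.hom ≫ R.iCycles j)
        simpa using h'
      · intro s; exact hz.eq_of_tgt _ _
      · intro s; simp
      · intro s l _ hl
        rw [← cancel_mono (R.iCycles (j-1))]
        simpa using hl
    obtain ⟨P', f', a', hf', hP1, hP2⟩ := ih (j-1) (by push_cast at hj; omega)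
      (fun k hk => hRA k (by omega)) P (m-1) b (by omega) ⟨e2⟩
      (fun k hkm => (h1 k (by omega)).of_iso (hk k (by omega) (by omega)).some)
      (fun k hkm => (h2 k (by omega)).of_iso (hk k (by omega) (by omega)).some)
      (fun k hkm => by
        by_cases h : k = m
        · subst h; exact hadd.iso e'.symm (hRA _ (by omega))
        · exact hadd.iso (hk k (by omega) h).some.symm (h3 k (by omega)))
    exact ⟨P', f' ≫ g, a', inferInstance, hP1, hP2⟩

end BddRes

/-- If `𝒜` satisfies (PR2) and every object of `C` has finite `𝒜`-resolution dimension,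
then every bounded cochain complex admits a quasi-isomorphism from a bounded cochain
complex with all terms in `𝒜`. -/
theorem exists_quasiIso_bounded_of_PR2_of_finite_resdim
    (𝒜 : C → Prop) (hadd : IsAdditiveClosed 𝒜) (hPR2 : PR2 𝒜)
    (hres : ∀ E : C, resdim 𝒜 E < ⊤)
    (E : CochainComplex C ℤ) (a b : ℤ)
    (hE : ∀ k : ℤ, (k < a ∨ b < k) → IsZero (E.X k)) :
    ∃ (A : CochainComplex C ℤ) (f : A ⟶ E) (a' b' : ℤ),
      (∀ k : ℤ, (k < a' ∨ b' < k) → IsZero (A.X k)) ∧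
      (∀ k : ℤ, 𝒜 (A.X k)) ∧ QuasiIso f := by
  obtain ⟨A, f, hf, h1, h2, h3⟩ := BddRes.phase1 hadd hPR2 E a b hE (b - a + 1).toNat
  set m : ℤ := b - (b - a + 1).toNat with hm
  have hma : m < a := by omega
  obtain ⟨n, R, e, hR1, hR2, hR3, hR4⟩ : ∃ n, IsResolutionOfLength 𝒜 (A.X m) n := by
    by_contra hcon
    push Not at hcon
    have := hres (A.X m)
    have he : {x : ℕ∞ | ∃ n : ℕ, x = (n : ℕ∞) ∧ IsResolutionOfLength 𝒜 (A.X m) n} = ∅ := by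
      ext x
      simp [hcon]
    simp only [resdim, he, sInf_empty, lt_self_iff_false] at this
  have : IsIso (R.iCycles 1) := R.isIso_iCycles 1 2 (by simp) ((hR1 2 (by omega)).eq_of_tgt _ _)
  obtain ⟨P, g, a', hg, hP1, hP2⟩ := BddRes.phase2 hadd R hR4 (-n) hR2 (n + 2) 1 (by push_cast; omega)
    (fun k hk => by
      by_cases h : k < -(n : ℤ)
      · exact BddRes.of_isZero hadd (hR2 k h)
      · exact hR3 k (by omega) (by omega)) A m b (by omega) ⟨e.symm ≪≫ (asIso (R.iCycles 1)).symm⟩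
    (fun k hk => h2 k (by omega) hk) h1 h3
  exact ⟨P, g ≫ f, a', b, hP1, hP2, inferInstance⟩
end

section
/- Let 𝒞 be an abelian category and let 𝒜 be a preresolving full additive subcategory with resdim_𝒜(𝒞) = n finite. Then for every (unbounded) cochain complex E• in 𝒞 there exist a cochain complex A• with all terms in 𝒜 and a chain map f : A• → E• which is a quasi-isomorphism. -/
open CategoryTheory CategoryTheory.Limits ZeroObject

universe v u

variable {C : Type u} [Category.{v} C] [Abelian C]

section helpers

/-- All `𝒜`-covers have kernel in `𝒜` (level `0`); level `j+1`: some `𝒜`-cover has kernel of level `j`. -/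
def RLev (𝒜 : C → Prop) : ℕ → C → Prop
  | 0, X => ∀ (A : C) (f : A ⟶ X), 𝒜 A → Epi f → 𝒜 (kernel f)
  | (j + 1), X => ∃ (A : C) (f : A ⟶ X), 𝒜 A ∧ Epi f ∧ RLev 𝒜 j (kernel f)

lemma RLev.iso {𝒜 : C → Prop} (hadd : IsAdditiveClosed 𝒜) {j : ℕ} {X Y : C} (e : X ≅ Y)
    (h : RLev 𝒜 j X) : RLev 𝒜 j Y := by
  cases j with
  | zero =>
    intro A f hA hf
    exact hadd.iso (kernelCompMono f e.inv) (h A (f ≫ e.inv) hA (epi_comp _ _))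
  | succ j =>
    obtain ⟨A, f, hA, hf, hk⟩ := h
    exact ⟨A, f ≫ e.hom, hA, epi_comp _ _, RLev.iso hadd (kernelCompMono f e.hom).symm hk⟩

lemma shortExact_kernel {X Y : C} (f : X ⟶ Y) [Epi f] :
    (ShortComplex.mk (kernel.ι f) f (kernel.condition f)).ShortExact where
  exact := ShortComplex.exact_kernel f

lemma RLev.of_mem {𝒜 : C → Prop} (hdef : DeflationClosed 𝒜) {X : C} (h : 𝒜 X) :
    RLev 𝒜 0 X := by
  intro A f hA hf
  exact hdef _ (shortExact_kernel f) hA h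

noncomputable def shortExactIsoKernel {S : ShortComplex C} (hS : S.ShortExact) :
    S.X₁ ≅ kernel S.g :=
  have := hS.mono_f
  IsLimit.conePointUniqueUpToIso hS.fIsKernel (limit.isLimit _)

lemma RLev.of_shortExact {𝒜 : C → Prop} (hadd : IsAdditiveClosed 𝒜) {j : ℕ}
    {S : ShortComplex C} (hS : S.ShortExact) (h₂ : 𝒜 S.X₂) (h₁ : RLev 𝒜 j S.X₁) :
    RLev 𝒜 (j + 1) S.X₃ :=
  ⟨_, S.g, h₂, hS.epi_g, h₁.iso hadd (shortExactIsoKernel hS)⟩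

/-- 3x3 lemma: kernels of a map of short exact sequences which is epi on the sides. -/
lemma kernels_shortExact {S T : ShortComplex C} (hS : S.ShortExact) (hT : T.ShortExact)
    (φ : S ⟶ T) [Epi φ.τ₁] [Epi φ.τ₃] :
    Epi φ.τ₂ ∧ (ShortComplex.mk (kernel.map φ.τ₁ φ.τ₂ S.f T.f φ.comm₁₂)
      (kernel.map φ.τ₂ φ.τ₃ S.g T.g φ.comm₂₃) (by
        ext; simp)).ShortExact := by
  have := hS.mono_f
  have := hS.epi_g
  have := hT.mono_f
  have := hT.epi_g
  have key : ∀ {A : C} (y : A ⟶ T.X₂) (z : A ⟶ S.X₃), y ≫ T.g = z ≫ φ.τ₃ →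
      ∃ (A' : C) (π : A' ⟶ A) (_ : Epi π) (x : A' ⟶ S.X₂), π ≫ y = x ≫ φ.τ₂ ∧
        π ≫ z = x ≫ S.g := by
    intro A y z h
    obtain ⟨A₁, π₁, _, x₁, hx₁⟩ := surjective_up_to_refinements_of_epi S.g z
    have h0 : (π₁ ≫ y - x₁ ≫ φ.τ₂) ≫ T.g = 0 := by
      rw [Preadditive.sub_comp, Category.assoc, Category.assoc, h, φ.comm₂₃, reassoc_of% hx₁,
        sub_self]
    obtain ⟨A₂, π₂, _, x₂, hx₂⟩ :=
      surjective_up_to_refinements_of_epi φ.τ₁ (hT.exact.lift _ h0)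
    refine ⟨A₂, π₂ ≫ π₁, inferInstance, π₂ ≫ x₁ + x₂ ≫ S.f, ?_, ?_⟩
    · have h1 := hx₂ =≫ T.f
      rw [Category.assoc, hT.exact.lift_f, Category.assoc, φ.comm₁₂] at h1
      rw [Preadditive.add_comp, Category.assoc, Category.assoc, Category.assoc, ← h1]
      simp
    · simp [hx₁]
  refine ⟨?_, ?_⟩
  · rw [epi_iff_surjective_up_to_refinements]
    intro A y
    obtain ⟨A₁, π₁, _, z, hz⟩ := surjective_up_to_refinements_of_epi φ.τ₃ (y ≫ T.g)
    obtain ⟨A', π, _, x, hx, _⟩ := key (π₁ ≫ y) z (by simpa using hz)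
    exact ⟨A', π ≫ π₁, inferInstance, x, by simpa using hx⟩
  · refine ShortComplex.ShortExact.mk' ?_ ?_ ?_
    · rw [ShortComplex.exact_iff_exact_up_to_refinements]
      intro A x hx
      dsimp at x hx
      have h1 : (x ≫ kernel.ι _) ≫ S.g = 0 := by
        have := hx =≫ kernel.ι _
        simpa using this
      refine ⟨A, 𝟙 A, inferInstance, kernel.lift _ (hS.exact.lift _ h1) ?_, ?_⟩
      · rw [← cancel_mono T.f, Category.assoc, φ.comm₁₂, hS.exact.lift_f_assoc]
        simp
      · dsimp
        ext
        simp
    · dsimp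
      have : Mono (kernel.map φ.τ₁ φ.τ₂ S.f T.f φ.comm₁₂ ≫ kernel.ι φ.τ₂) := by
        rw [kernel.lift_ι]
        infer_instance
      exact mono_of_mono _ (kernel.ι φ.τ₂)
    · dsimp
      rw [epi_iff_surjective_up_to_refinements]
      intro A z
      obtain ⟨A', π, _, x, hx, hx'⟩ := key (0 : A ⟶ T.X₂) (z ≫ kernel.ι _) (by simp)
      refine ⟨A', π, inferInstance, kernel.lift _ x (by simpa using hx.symm), ?_⟩
      ext
      simpa using hx'

lemma biprod_shortExact (A B : C) :
    (ShortComplex.mk (biprod.inl : A ⟶ A ⊞ B) biprod.snd (by simp)).ShortExact :=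
  (ShortComplex.Splitting.ofHasBinaryBiproduct A B).shortExact

/-- Cover of an extension. -/
lemma cover_ext {T : ShortComplex C} (hT : T.ShortExact) {A B : C} (f : A ⟶ T.X₁)
    (g : B ⟶ T.X₂) [Epi f] [Epi (g ≫ T.g)] :
    Epi (biprod.desc (f ≫ T.f) g) ∧ ∃ S : ShortComplex C, S.ShortExact ∧
      S.X₁ = kernel f ∧ S.X₂ = kernel (biprod.desc (f ≫ T.f) g) ∧ S.X₃ = kernel (g ≫ T.g) := by
  let φ : ShortComplex.mk (biprod.inl : A ⟶ A ⊞ B) biprod.snd (by simp) ⟶ T :=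
    { τ₁ := f
      τ₂ := biprod.desc (f ≫ T.f) g
      τ₃ := g ≫ T.g
      comm₁₂ := by simp
      comm₂₃ := by dsimp; ext <;> simp }
  have : Epi φ.τ₁ := by assumption
  have : Epi φ.τ₃ := by assumption
  obtain ⟨h1, h2⟩ := kernels_shortExact (biprod_shortExact A B) hT φ
  exact ⟨h1, _, h2, rfl, rfl, rfl⟩

/-- Each level is closed under extensions with quotient in `𝒜`. -/
lemma RLev.ext {𝒜 : C → Prop} (hadd : IsAdditiveClosed 𝒜)
    (hdef : DeflationClosed 𝒜) (hPR2 : PR2 𝒜) (j : ℕ) :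
    ∀ {S : ShortComplex C}, S.ShortExact → RLev 𝒜 j S.X₁ → 𝒜 S.X₃ → RLev 𝒜 j S.X₂ := by
  induction j with
  | zero =>
    intro S hS h₁ h₃ A f hA hf
    have := hS.mono_f
    have := hS.epi_g
    have hL : 𝒜 (kernel (f ≫ S.g)) := hdef _ (shortExact_kernel (f ≫ S.g)) hA h₃
    let q : kernel (f ≫ S.g) ⟶ S.X₁ :=
      hS.exact.lift (kernel.ι (f ≫ S.g) ≫ f) (by simp)
    have hq : q ≫ S.f = kernel.ι (f ≫ S.g) ≫ f := hS.exact.lift_f _ _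
    have : Epi q := by
      rw [epi_iff_surjective_up_to_refinements]
      intro T y
      obtain ⟨T', π, _, x, hx⟩ := surjective_up_to_refinements_of_epi f (y ≫ S.f)
      refine ⟨T', π, inferInstance, kernel.lift _ x ?_, ?_⟩
      · rw [← reassoc_of% hx]; simp
      · rw [← cancel_mono S.f, Category.assoc, Category.assoc, hq, kernel.lift_ι_assoc, hx]
    refine hadd.iso ?_ (h₁ _ q hL inferInstance)
    exact
      { hom := kernel.lift _ (kernel.ι q ≫ kernel.ι _) (by
          rw [Category.assoc, ← hq, kernel.condition_assoc, zero_comp])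
        inv := kernel.lift _ (kernel.lift _ (kernel.ι f) (by simp)) (by
          rw [← cancel_mono S.f, Category.assoc, hq]; simp)
        hom_inv_id := by ext; simp
        inv_hom_id := by ext; simp }
  | succ j ih =>
    intro S hS h₁ h₃
    obtain ⟨A, f, hA, hf, hk⟩ := h₁
    obtain ⟨B, g, hB, hg⟩ := hPR2 S.X₂
    have := hS.epi_g
    obtain ⟨h, T, hT, e₁, e₂, e₃⟩ := cover_ext hS f g
    refine ⟨_, _, hadd.biprod hA hB, h, ?_⟩
    rw [← e₂]
    refine ih hT (by rwa [e₁]) ?_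
    rw [e₃]
    exact hdef _ (shortExact_kernel (g ≫ S.g)) hB h₃

/-- The kernel of `A ⊞ B ⟶ Y` when `A ⟶ Y` is already epi. -/
lemma RLev.desc {𝒜 : C → Prop} (hadd : IsAdditiveClosed 𝒜)
    (hdef : DeflationClosed 𝒜) (hPR2 : PR2 𝒜) {j : ℕ} {A B Y : C} (f : A ⟶ Y) (g : B ⟶ Y)
    [Epi f] (hB : 𝒜 B) (hk : RLev 𝒜 j (kernel f)) :
    RLev 𝒜 j (kernel (biprod.desc f g)) := by
  have hT : (ShortComplex.mk (𝟙 Y) (0 : Y ⟶ 0) (by simp)).ShortExact :=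
    { exact := (ShortComplex.exact_iff_epi _ rfl).2 (by dsimp; infer_instance)
      mono_f := by dsimp; infer_instance
      epi_g := ⟨fun _ _ _ => (isZero_zero C).eq_of_src _ _⟩ }
  have : Epi (g ≫ (0 : Y ⟶ 0)) := ⟨fun _ _ _ => (isZero_zero C).eq_of_src _ _⟩
  obtain ⟨-, T, hT', e₁, e₂, e₃⟩ := cover_ext hT f g
  dsimp at e₁ e₂ e₃
  rw [Category.comp_id] at e₂
  rw [← e₂]
  refine RLev.ext hadd hdef hPR2 j hT' (by rwa [e₁]) ?_
  rw [e₃]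
  refine hadd.iso ?_ hB
  have h0 : g ≫ (0 : Y ⟶ 0) = 0 := comp_zero
  exact (kernelIsoOfEq h0 ≪≫ kernelZeroIsoSource).symm

/-- The contractible complex with terms `A k ⊞ A (k-1)`. -/
noncomputable def discComplex (A : ℤ → C) : CochainComplex C ℤ where
  X k := A k ⊞ A (k - 1)
  d i j := if h : i = j - 1 then biprod.fst ≫ eqToHom (by rw [h]) ≫ biprod.inr else 0
  shape i j hij := by
    rw [dif_neg]
    intro h
    apply hij
    simp [h]
  d_comp_d' i j k _ _ := by
    by_cases h : i = j - 1
    · by_cases h' : j = k - 1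
      · simp [h, h']
      · simp [h']
    · simp [h]

noncomputable def discMap {A : ℤ → C} {E : CochainComplex C ℤ} (p : ∀ k, A k ⟶ E.X k) :
    discComplex A ⟶ E where
  f k := biprod.desc (p k) (p (k - 1) ≫ E.d (k - 1) k)
  comm' i j hij := by
    have h : i = j - 1 := by
      have : i + 1 = j := hij
      omega
    subst h
    dsimp [discComplex]
    rw [if_pos rfl]
    ext <;> simp

lemma exists_cover {𝒜 : C → Prop} (hadd : IsAdditiveClosed 𝒜)
    (hdef : DeflationClosed 𝒜) (hPR2 : PR2 𝒜) {j : ℕ} (E : CochainComplex C ℤ)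
    (p : ∀ k, ∃ (A : C) (f : A ⟶ E.X k), 𝒜 A ∧ Epi f ∧ RLev 𝒜 j (kernel f)) :
    ∃ (P : CochainComplex C ℤ) (φ : P ⟶ E), (∀ k, 𝒜 (P.X k)) ∧ (∀ k, Epi (φ.f k)) ∧
      ∀ k, RLev 𝒜 j (kernel (φ.f k)) := by
  choose A f hA hf hk using p
  refine ⟨discComplex A, discMap f, fun k => hadd.biprod (hA _) (hA _), fun k => ?_, fun k => ?_⟩
  · have : Epi (biprod.inl ≫ (discMap f).f k) := by
      dsimp [discMap]
      rw [biprod.inl_desc]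
      exact hf k
    exact epi_of_epi biprod.inl _
  · have := hf k
    exact RLev.desc hadd hdef hPR2 _ _ (hA _) (hk k)

lemma exists_cover_zero {𝒜 : C → Prop} (hadd : IsAdditiveClosed 𝒜) (hPR2 : PR2 𝒜)
    (E : CochainComplex C ℤ) :
    ∃ (P : CochainComplex C ℤ) (φ : P ⟶ E), (∀ k, 𝒜 (P.X k)) ∧ (∀ k, Epi (φ.f k)) := by
  choose A f hA hf using fun k => hPR2 (E.X k)
  refine ⟨discComplex A, discMap f, fun k => hadd.biprod (hA _) (hA _), fun k => ?_⟩
  have : Epi (biprod.inl ≫ (discMap f).f k) := by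
    dsimp [discMap]
    rw [biprod.inl_desc]
    exact hf k
  exact epi_of_epi biprod.inl _

lemma quasiIso_cone_map {K L M : CochainComplex C ℤ} (a : K ⟶ L) (b : L ⟶ M) [QuasiIso a] :
    QuasiIso (CochainComplex.mappingCone.map (a ≫ b) b a (𝟙 M) (by simp)) := by
  let _ : HasDerivedCategory.{max u v} C := HasDerivedCategory.standard C
  rw [← DerivedCategory.isIso_Q_map_iff_quasiIso]
  let τ := CochainComplex.mappingCone.triangleMap (a ≫ b) b a (𝟙 M) (by simp)
  refine Pretriangulated.isIso₃_of_isIso₁₂ (DerivedCategory.Q.mapTriangle.map τ)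
    ?_ ?_ ?_ ?_
  · rw [DerivedCategory.mem_distTriang_iff]
    exact ⟨_, _, _, ⟨Iso.refl _⟩⟩
  · rw [DerivedCategory.mem_distTriang_iff]
    exact ⟨_, _, _, ⟨Iso.refl _⟩⟩
  · change IsIso (DerivedCategory.Q.map a)
    infer_instance
  · change IsIso (DerivedCategory.Q.map (𝟙 M))
    infer_instance

lemma cone_step {𝒜 : C → Prop} (hadd : IsAdditiveClosed 𝒜) {P E : CochainComplex C ℤ}
    (φ : P ⟶ E) (hP : ∀ k, 𝒜 (P.X k)) (hφ : ∀ k, Epi (φ.f k))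
    (H : ∀ K : CochainComplex C ℤ, (∀ k, Nonempty (K.X k ≅ kernel (φ.f k))) →
      ∃ (A : CochainComplex C ℤ) (f : A ⟶ K), (∀ k : ℤ, 𝒜 (A.X k)) ∧ QuasiIso f) :
    ∃ (A : CochainComplex C ℤ) (f : A ⟶ E), (∀ k : ℤ, 𝒜 (A.X k)) ∧ QuasiIso f := by
  have : Epi φ := HomologicalComplex.epi_of_epi_f _ hφ
  let S := ShortComplex.mk (kernel.ι φ) φ (kernel.condition φ)
  have hS : S.ShortExact := shortExact_kernel φ
  obtain ⟨A, f, hA, hf⟩ := H (kernel φ) (fun k => ⟨shortExactIsoKernel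
    ((HomologicalComplex.shortExact_iff_degreewise_shortExact S).1 hS k)⟩)
  refine ⟨CochainComplex.mappingCone (f ≫ S.f),
    CochainComplex.mappingCone.map (f ≫ S.f) S.f f (𝟙 _) (by simp) ≫
      CochainComplex.mappingCone.descShortComplex S, fun k => ?_, ?_⟩
  · exact hadd.iso (HomologicalComplex.homotopyCofiber.XIsoBiprod (f ≫ S.f) k (k + 1) rfl).symm
      (hadd.biprod (hA _) (hP _))
  · have := quasiIso_cone_map f S.f
    have := CochainComplex.mappingCone.quasiIso_descShortComplex hS
    infer_instance

lemma exists_quasiIso_of_RLev {𝒜 : C → Prop} (hadd : IsAdditiveClosed 𝒜)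
    (hdef : DeflationClosed 𝒜) (hPR2 : PR2 𝒜) (j : ℕ) :
    ∀ (E : CochainComplex C ℤ), (∀ k, RLev 𝒜 j (E.X k)) →
    ∃ (A : CochainComplex C ℤ) (f : A ⟶ E), (∀ k : ℤ, 𝒜 (A.X k)) ∧ QuasiIso f := by
  induction j with
  | zero =>
    intro E hE
    obtain ⟨P, φ, hP, hφ⟩ := exists_cover_zero hadd hPR2 E
    refine cone_step hadd φ hP hφ (fun K hK => ⟨K, 𝟙 K, fun k => ?_, inferInstance⟩)
    exact hadd.iso (hK k).some.symm (hE k _ _ (hP k) (hφ k))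
  | succ j ih =>
    intro E hE
    obtain ⟨P, φ, hP, hφ, hk⟩ := exists_cover hadd hdef hPR2 E hE
    exact cone_step hadd φ hP hφ
      (fun K hK => ih K (fun k => (hk k).iso hadd (hK k).some.symm))

lemma cycles_shortExact (R : CochainComplex C ℤ) (hR : ∀ k, R.ExactAt k) (i j : ℤ)
    (hij : i + 1 = j) :
    (ShortComplex.mk (R.iCycles i) (R.toCycles i j) (by
      rw [← cancel_mono (R.iCycles j)]; simp)).ShortExact := by
  refine ShortComplex.ShortExact.mk' ?_ (by dsimp; infer_instance) ?_
  · rw [ShortComplex.exact_iff_exact_up_to_refinements]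
    intro A x hx
    dsimp at x hx
    have hx' : x ≫ R.d i j = 0 := by
      rw [← R.toCycles_i i j, reassoc_of% hx, zero_comp]
    refine ⟨A, 𝟙 A, inferInstance, R.liftCycles x j (by simp [← hij]) hx', ?_⟩
    exact (Category.id_comp _).trans (R.liftCycles_i x j (by simp [← hij]) hx').symm
  · dsimp
    have h := hR j
    rw [R.exactAt_iff' i j (j + 1) (by simp [← hij]) (by simp)] at h
    rw [epi_iff_surjective_up_to_refinements]
    intro A y
    obtain ⟨A', π, hπ, x, hx⟩ := h.exact_up_to_refinements (y ≫ R.iCycles j)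
      (show (y ≫ R.iCycles j) ≫ R.d j (j + 1) = 0 by rw [Category.assoc, R.iCycles_d, comp_zero])
    refine ⟨A', π, hπ, x, ?_⟩
    rw [← cancel_mono (R.iCycles j)]
    exact (Category.assoc _ _ _).trans (hx.trans (((R.toCycles_i i j).symm ▸ rfl :
      x ≫ R.d i j = x ≫ R.toCycles i j ≫ R.iCycles j).trans (Category.assoc _ _ _).symm))

lemma RLev.of_resolution {𝒜 : C → Prop} (hadd : IsAdditiveClosed 𝒜)
    (hdef : DeflationClosed 𝒜) (n m : ℕ) (hm : m ≤ n) (E : C)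
    (h : IsResolutionOfLength 𝒜 E m) : RLev 𝒜 (n + 2) E := by
  obtain ⟨R, e, h1, h2, h3, h4⟩ := h
  have hz : ∀ {X : C}, IsZero X → 𝒜 X := fun hX =>
    hadd.iso (((isZero_zero C).iso hX)) hadd.zero
  have hA : ∀ k : ℤ, k ≤ 0 → 𝒜 (R.X k) := fun k hk => by
    by_cases h : k < -(m : ℤ)
    · exact hz (h2 k h)
    · exact h3 k (by omega) hk
  have key : ∀ j : ℕ, j ≤ n + 2 → RLev 𝒜 j (R.cycles (-(n : ℤ) - 1 + j)) := by
    intro j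
    induction j with
    | zero =>
      intro _
      refine RLev.of_mem hdef (hz ?_)
      exact IsZero.of_mono (R.iCycles _) (h2 _ (by push_cast; omega))
    | succ j ih =>
      intro hj
      exact RLev.of_shortExact hadd
        (cycles_shortExact R h4 (-(n : ℤ) - 1 + j) (-(n : ℤ) - 1 + (j + 1 : ℕ))
          (by push_cast; ring)) (hA _ (by omega)) (ih (by omega))
  have h5 := key (n + 2) le_rfl
  have h6 : -(n : ℤ) - 1 + (n + 2 : ℕ) = 1 := by push_cast; ring
  rw [h6] at h5
  have : IsIso (R.iCycles 1) := R.isIso_iCycles 1 2 (by simp) ((h1 2 (by omega)).eq_of_tgt _ _)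
  exact h5.iso hadd (asIso (R.iCycles 1) ≪≫ e)

end helpers

/-- If `𝒜` is preresolving (deflation-closed and (PR2)) with `resdim_𝒜 (C) = n` finite,
then every unbounded cochain complex admits a quasi-isomorphism from a cochain complex
with all terms in `𝒜`. -/
theorem exists_quasiIso_of_uniformly_preresolving
    (𝒜 : C → Prop) (hadd : IsAdditiveClosed 𝒜)
    (hdef : DeflationClosed 𝒜) (hPR2 : PR2 𝒜)
    (n : ℕ) (hres : resdimCat 𝒜 = (n : ℕ∞))
    (E : CochainComplex C ℤ) :
    ∃ (A : CochainComplex C ℤ) (f : A ⟶ E),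
      (∀ k : ℤ, 𝒜 (A.X k)) ∧ QuasiIso f := by
  refine exists_quasiIso_of_RLev hadd hdef hPR2 (n + 2) E (fun k => ?_)
  have h : resdim 𝒜 (E.X k) ≤ (n : ℕ∞) := hres ▸ le_iSup (fun X => resdim 𝒜 X) (E.X k)
  have hne : {m : ℕ∞ | ∃ n : ℕ, m = (n : ℕ∞) ∧ IsResolutionOfLength 𝒜 (E.X k) n}.Nonempty := by
    by_contra hne
    rw [Set.not_nonempty_iff_eq_empty] at hne
    rw [resdim, hne, sInf_empty] at h
    simp at h
  obtain ⟨m, hm, hr⟩ := csInf_mem hne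
  have hm' : resdim 𝒜 (E.X k) = m := hm
  rw [hm'] at h
  exact RLev.of_resolution hadd hdef n m (by exact_mod_cast h) _ hr
end

section
/- Let 𝒞 be an abelian category and let 𝒜 be a preresolving full additive subcategory which is moreover extension-closed (for every short exact sequence 0 → X → Y → Z → 0 with X and Z in 𝒜, also Y lies in 𝒜) and satisfies resdim_𝒜(𝒞) = n finite. Then every acyclic (unbounded) cochain complex A• with all terms in 𝒜 has the image of each differential in 𝒜. -/
open CategoryTheory CategoryTheory.Limits ZeroObject

universe v u

variable {C : Type u} [Category.{v} C] [Abelian C]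

/-- `𝒜` is extension-closed: for every short exact sequence `0 → X → Y → Z → 0`
with `X, Z ∈ 𝒜`, also `Y ∈ 𝒜`. -/
def ExtensionClosed (𝒜 : C → Prop) : Prop :=
  ∀ (S : ShortComplex C), S.ShortExact → 𝒜 S.X₁ → 𝒜 S.X₃ → 𝒜 S.X₂

/-- Inductive form of having a resolution of length `m`. -/
def DD (𝒜 : C → Prop) : ℕ → C → Prop
  | 0, E => 𝒜 E
  | m + 1, E => ∃ (B : C) (g : B ⟶ E), Epi g ∧ 𝒜 B ∧ DD 𝒜 m (kernel g)

lemma DD.iso {𝒜 : C → Prop} (hadd : IsAdditiveClosed 𝒜) :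
    ∀ (m : ℕ) {X Y : C}, (X ≅ Y) → DD 𝒜 m X → DD 𝒜 m Y
  | 0, _, _, e, h => hadd.iso e h
  | m + 1, _, _, e, ⟨B, g, hg, hB, hK⟩ =>
    ⟨B, g ≫ e.hom, epi_comp _ _, hB, DD.iso hadd m (kernelCompMono g e.hom).symm hK⟩

lemma ses_kernel {X Y : C} (g : X ⟶ Y) [Epi g] :
    (ShortComplex.mk (kernel.ι g) g (kernel.condition g)).ShortExact :=
  ShortComplex.ShortExact.mk' (ShortComplex.exact_of_f_is_kernel _ (kernelIsKernel g))
    (by dsimp; infer_instance) (by dsimp; infer_instance)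

lemma ses_of {X Y Z : C} (f : X ⟶ Y) (g : Y ⟶ Z) (w : f ≫ g = 0) [Mono f] [Epi g]
    (H : ∀ (W : C) (k : W ⟶ Y), k ≫ g = 0 → ∃ l : W ⟶ X, l ≫ f = k) :
    (ShortComplex.mk f g w).ShortExact := by
  refine ShortComplex.ShortExact.mk' (ShortComplex.exact_of_f_is_kernel _ ?_)
    (by dsimp; infer_instance) (by dsimp; infer_instance)
  exact KernelFork.IsLimit.ofι' _ _ fun {W} k hk => ⟨(H W k hk).choose, (H W k hk).choose_spec⟩

lemma DD.of_ses {𝒜 : C → Prop} (hadd : IsAdditiveClosed 𝒜) (m : ℕ) (S : ShortComplex C)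
    (hS : S.ShortExact) (h2 : 𝒜 S.X₂) (h1 : DD 𝒜 m S.X₁) : DD 𝒜 (m + 1) S.X₃ := by
  have := hS.mono_f
  exact ⟨S.X₂, S.g, hS.epi_g, h2, DD.iso hadd m
    (IsLimit.conePointUniqueUpToIso (kernelIsKernel S.g) hS.exact.fIsKernel).symm h1⟩

lemma DD.ker_iso_of_ses {𝒜 : C → Prop} (hadd : IsAdditiveClosed 𝒜) (m : ℕ) (S : ShortComplex C)
    (hS : S.ShortExact) (h : DD 𝒜 m (kernel S.g)) : DD 𝒜 m S.X₁ := by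
  have := hS.mono_f
  exact DD.iso hadd m
    (IsLimit.conePointUniqueUpToIso (kernelIsKernel S.g) hS.exact.fIsKernel) h

lemma DD.succ {𝒜 : C → Prop} (hadd : IsAdditiveClosed 𝒜) :
    ∀ (m : ℕ) {E : C}, DD 𝒜 m E → DD 𝒜 (m + 1) E
  | 0, E, h => ⟨E, 𝟙 E, inferInstance, h,
      hadd.iso ((isZero_zero C).iso (isZero_kernel_of_mono (𝟙 E))) hadd.zero⟩
  | m + 1, _, ⟨B, g, hg, hB, hK⟩ => ⟨B, g, hg, hB, DD.succ hadd m hK⟩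

lemma DD.mono {𝒜 : C → Prop} (hadd : IsAdditiveClosed 𝒜) {m n : ℕ} (hmn : m ≤ n) {E : C}
    (h : DD 𝒜 m E) : DD 𝒜 n E := by
  induction hmn with
  | refl => exact h
  | step _ ih => exact DD.succ hadd _ ih

/-- kernels of parallel maps in a pullback square -/
noncomputable def kerFst {X Y Z : C} (f : X ⟶ Z) (g : Y ⟶ Z) :
    kernel (pullback.fst f g) ≅ kernel g :=
  have := isIso_kernel_map_of_isPullback (IsPullback.of_hasPullback f g)
  asIso (kernel.map _ _ _ _ (IsPullback.of_hasPullback f g).w)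

noncomputable def kerSnd {X Y Z : C} (f : X ⟶ Z) (g : Y ⟶ Z) :
    kernel (pullback.snd f g) ≅ kernel f :=
  have := isIso_kernel_map_of_isPullback (IsPullback.of_hasPullback f g).flip
  asIso (kernel.map _ _ _ _ (IsPullback.of_hasPullback f g).flip.w)

lemma DD.kernel_mem {𝒜 : C → Prop} (hadd : IsAdditiveClosed 𝒜) (hdef : DeflationClosed 𝒜)
    (m : ℕ) {P B : C} (f : P ⟶ B) [Epi f] (hP : DD 𝒜 m P) (hB : 𝒜 B) : DD 𝒜 m (kernel f) := by
  cases m with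
  | zero => exact hdef _ (ses_kernel f) hP hB
  | succ m =>
    obtain ⟨D, g, hg, hD, hK⟩ := hP
    refine ⟨pullback g (kernel.ι f), pullback.snd _ _, inferInstance, ?_,
      DD.iso hadd m (kerSnd _ _).symm hK⟩
    have w : pullback.fst g (kernel.ι f) ≫ (g ≫ f) = 0 := by
      rw [pullback.condition_assoc]; simp
    refine hdef (ShortComplex.mk (pullback.fst g (kernel.ι f)) (g ≫ f) w) ?_ hD hB
    refine ses_of _ _ w fun W k hk => ?_
    exact ⟨pullback.lift k (kernel.lift f (k ≫ g) (by simpa using hk)) (by simp),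
      pullback.lift_fst _ _ _⟩

lemma DD.ext_mem {𝒜 : C → Prop} (hadd : IsAdditiveClosed 𝒜) (hdef : DeflationClosed 𝒜)
    (hPR2 : PR2 𝒜) (hext : ExtensionClosed 𝒜) :
    ∀ (m : ℕ) {P B : C} (f : P ⟶ B) [Epi f] (_ : DD 𝒜 m (kernel f)) (_ : 𝒜 B), DD 𝒜 m P := by
  intro m
  induction m with
  | zero => intro P B f _ hK hB; exact hext _ (ses_kernel f) hK hB
  | succ m ih =>
    intro P A' f _ hK hA'
    obtain ⟨B, g, hg, hB, hL⟩ := hK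
    obtain ⟨B', b, hB', hb⟩ := hPR2 P
    have hB'' : 𝒜 (kernel (b ≫ f)) := hdef _ (ses_kernel (b ≫ f)) hB' hA'
    let b'' : kernel (b ≫ f) ⟶ kernel f := kernel.lift f (kernel.ι (b ≫ f) ≫ b) (by simp)
    have hQ : DD 𝒜 m (pullback g b'') :=
      ih (pullback.snd g b'') (DD.iso hadd m (kerSnd _ _).symm hL) hB''
    let h : B ⊞ B' ⟶ P := biprod.desc (g ≫ kernel.ι f) b
    haveI : Epi h := by
      have : Epi (biprod.inr ≫ h) := by simpa [h] using hb
      exact epi_of_epi biprod.inr h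
    let q : pullback g b'' ⟶ B ⊞ B' :=
      biprod.lift (pullback.fst g b'') (-(pullback.snd g b'' ≫ kernel.ι (b ≫ f)))
    have w : q ≫ h = 0 := by
      simp only [q, h, biprod.lift_desc]
      rw [pullback.condition_assoc]
      simp [b'']
    haveI : Mono q := by
      refine ⟨fun u v huv => ?_⟩
      have h1 := congrArg (· ≫ biprod.fst) huv
      have h2 := congrArg (· ≫ biprod.snd) huv
      simp only [q, Category.assoc, biprod.lift_fst, biprod.lift_snd, Preadditive.comp_neg,
        neg_inj] at h1 h2
      apply pullback.hom_ext h1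
      rw [← cancel_mono (kernel.ι (b ≫ f))]
      simpa using h2
    refine DD.of_ses hadd m (ShortComplex.mk q h w) ?_ (hadd.biprod hB hB') hQ
    refine ses_of _ _ w fun W k hk => ?_
    have hk' : (k ≫ biprod.fst) ≫ g ≫ kernel.ι f + (k ≫ biprod.snd) ≫ b = 0 := by
      have : h = biprod.fst ≫ g ≫ kernel.ι f + biprod.snd ≫ b := by
        simp only [h, biprod.desc_eq]
      rw [this] at hk
      simpa using hk
    have hk2 : (k ≫ biprod.snd) ≫ b ≫ f = 0 := by
      have := congrArg (· ≫ f) hk'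
      simpa using this
    refine ⟨pullback.lift (k ≫ biprod.fst)
      (kernel.lift (b ≫ f) (-(k ≫ biprod.snd)) (by simpa using hk2)) ?_, ?_⟩
    · rw [← cancel_mono (kernel.ι f)]
      simp only [b'', Category.assoc, kernel.lift_ι, kernel.lift_ι_assoc, Preadditive.neg_comp]
      rw [eq_neg_iff_add_eq_zero]
      simpa using hk'
    · apply biprod.hom_ext
      · simp only [q, Category.assoc, biprod.lift_fst]
        exact pullback.lift_fst _ _ _
      · simp only [q, Category.assoc, biprod.lift_snd, Preadditive.comp_neg]
        rw [pullback.lift_snd_assoc, kernel.lift_ι, neg_neg]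

lemma DD.claim {𝒜 : C → Prop} (hadd : IsAdditiveClosed 𝒜) (hdef : DeflationClosed 𝒜)
    (hPR2 : PR2 𝒜) (hext : ExtensionClosed 𝒜) (m : ℕ) (S : ShortComplex C) (hS : S.ShortExact)
    (h3 : DD 𝒜 (m + 1) S.X₃) (h2 : 𝒜 S.X₂) : DD 𝒜 m S.X₁ := by
  apply DD.ker_iso_of_ses hadd m S hS
  have := hS.epi_g
  obtain ⟨B, g, hg, hB, hK⟩ := h3
  have hP : DD 𝒜 m (pullback g S.g) :=
    DD.ext_mem hadd hdef hPR2 hext m (pullback.snd g S.g) (DD.iso hadd m (kerSnd _ _).symm hK) h2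
  exact DD.iso hadd m (kerFst g S.g) (DD.kernel_mem hadd hdef m (pullback.fst g S.g) hP hB)

lemma ses_image (R : CochainComplex C ℤ) (i j k : ℤ) (hij : i + 1 = j) (hjk : j + 1 = k)
    (hR : R.ExactAt j) :
    ∃ w, (ShortComplex.mk (image.ι (R.d i j)) (factorThruImage (R.d j k)) w).ShortExact := by
  have w : image.ι (R.d i j) ≫ factorThruImage (R.d j k) = 0 := by
    rw [← cancel_epi (factorThruImage (R.d i j)), ← cancel_mono (image.ι (R.d j k))]
    simp
  refine ⟨w, ShortComplex.ShortExact.mk' ?_ (by dsimp; infer_instance) (by dsimp; infer_instance)⟩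
  rw [R.exactAt_iff' i j k (by simp; omega) (by simp; omega)] at hR
  rw [ShortComplex.exact_iff_exact_up_to_refinements] at hR ⊢
  intro W (x : W ⟶ R.X j) (hx : x ≫ factorThruImage (R.d j k) = 0)
  have hx' : x ≫ R.d j k = 0 := by
    rw [← image.fac (R.d j k), reassoc_of% hx, zero_comp]
  obtain ⟨W', π, hπ, y, hy⟩ := hR x hx'
  refine ⟨W', π, hπ, (show W' ⟶ R.X i from y) ≫ factorThruImage (R.d i j), ?_⟩
  refine hy.trans ?_
  change (show W' ⟶ R.X i from y) ≫ R.d i j = (_ ≫ _) ≫ image.ι _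
  rw [Category.assoc, image.fac]

lemma DD.of_res {𝒜 : C → Prop} (hadd : IsAdditiveClosed 𝒜) (n : ℕ) (E : C)
    (h : IsResolutionOfLength 𝒜 E n) : DD 𝒜 n E := by
  obtain ⟨R, e, h1, h2, h3, h4⟩ := h
  have key : ∀ m : ℕ, m ≤ n → ∀ k l : ℤ, k = -(n : ℤ) + m → k + 1 = l →
      DD 𝒜 m (image (R.d k l)) := by
    intro m
    induction m with
    | zero =>
      intro _ k l hk hl
      obtain ⟨w, hS⟩ := ses_image R (k - 1) k l (by omega) hl (h4 k)
      have : IsIso (factorThruImage (R.d k l)) :=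
        hS.isIso_g_iff.2 (IsZero.of_epi (factorThruImage (R.d (k - 1) k)) (h2 _ (by omega)))
      exact hadd.iso (asIso (factorThruImage (R.d k l))) (h3 k (by omega) (by omega))
    | succ m ih =>
      intro hm k l hk hl
      obtain ⟨w, hS⟩ := ses_image R (k - 1) k l (by omega) hl (h4 k)
      exact DD.of_ses hadd m _ hS (h3 k (by omega) (by omega))
        (ih (by omega) (k - 1) k (by push_cast at hk; omega) (by omega))
  obtain ⟨w, hS⟩ := ses_image R 0 1 2 (by omega) (by omega) (h4 1)
  have : IsIso (image.ι (R.d 0 1)) :=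
    hS.isIso_f_iff.2 (IsZero.of_mono (image.ι (R.d 1 2)) (h1 2 (by omega)))
  exact DD.iso hadd n (asIso (image.ι (R.d 0 1)) ≪≫ e) (key n le_rfl 0 1 (by omega) (by omega))

lemma DD.all {𝒜 : C → Prop} (hadd : IsAdditiveClosed 𝒜) (n : ℕ)
    (hres : resdimCat 𝒜 = (n : ℕ∞)) (E : C) : DD 𝒜 n E := by
  have hle : resdim 𝒜 E ≤ n := by
    rw [← hres]; exact le_iSup (fun E : C => resdim 𝒜 E) E
  have hne : {m : ℕ∞ | ∃ n : ℕ, m = (n : ℕ∞) ∧ IsResolutionOfLength 𝒜 E n}.Nonempty := by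
    by_contra hcon
    rw [Set.not_nonempty_iff_eq_empty] at hcon
    rw [resdim, hcon, sInf_empty] at hle
    exact absurd hle (by simp)
  obtain ⟨m, hm, hr⟩ := csInf_mem hne
  have hm' : resdim 𝒜 E = m := hm
  rw [hm'] at hle
  exact DD.mono hadd (by exact_mod_cast hle) (DD.of_res hadd m E hr)

/-- If `𝒜` is preresolving, extension-closed and `resdim_𝒜 (C) = n` is finite, then every
acyclic unbounded cochain complex with terms in `𝒜` has all images of differentials in `𝒜`. -/
theorem image_mem_of_acyclic_of_extensionClosed
    (𝒜 : C → Prop) (hadd : IsAdditiveClosed 𝒜)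
    (hdef : DeflationClosed 𝒜) (hPR2 : PR2 𝒜) (hext : ExtensionClosed 𝒜)
    (n : ℕ) (hres : resdimCat 𝒜 = (n : ℕ∞))
    (A : CochainComplex C ℤ) (hterms : ∀ k : ℤ, 𝒜 (A.X k))
    (hacy : ∀ k : ℤ, A.ExactAt k) (i : ℤ) :
    𝒜 (image (A.d i (i + 1))) := by
  have key : ∀ m : ℕ, m ≤ n → ∀ k l : ℤ, k + 1 = l → DD 𝒜 (n - m) (image (A.d k l)) := by
    intro m
    induction m with
    | zero => intro _ k l _; exact DD.all hadd n hres _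
    | succ m ih =>
      intro hm k l hl
      obtain ⟨w, hS⟩ := ses_image A k l (l + 1) hl rfl (hacy l)
      refine DD.claim hadd hdef hPR2 hext (n - (m + 1)) _ hS ?_ (hterms l)
      have := ih (by omega) l (l + 1) rfl
      rwa [show n - m = n - (m + 1) + 1 by omega] at this
  have := key n le_rfl i (i + 1) rfl
  rwa [Nat.sub_self] at this
end

section
/- Let 𝒞 be an abelian category and let 𝒜 be a preresolving full additive subcategory with resdim_𝒜(𝒞) = n finite. Then for every acyclic cochain complex E• with all terms in 𝒜 and every integer l, there exists an object B in 𝒜 such that im(d_E^l) ⊕ B lies in 𝒜; in particular resdim_𝒜(im(d_E^l)) ≤ 1. -/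
open CategoryTheory CategoryTheory.Limits ZeroObject

universe v u

variable {C : Type u} [Category.{v} C] [Abelian C]

/-- All pullbacks of `𝒜`-covers of the target along `f` lie in `𝒜`. -/
def GoodMap (𝒜 : C → Prop) {X Y : C} (f : X ⟶ Y) : Prop :=
  ∀ (E : C) (e : E ⟶ Y), 𝒜 E → Epi e → 𝒜 (pullback f e)

/-- `X` is an `n`-fold extension quotient. -/
inductive ResN (𝒜 : C → Prop) : ℕ → C → Prop
  | zero {X : C} : 𝒜 X → ResN 𝒜 0 X
  | succ {n : ℕ} (S : ShortComplex C) : S.ShortExact → 𝒜 S.X₂ → ResN 𝒜 n S.X₁ →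
      ResN 𝒜 (n + 1) S.X₃

/-- `Y'` is an `n`-th syzygy of `Y`. -/
inductive SyzN (𝒜 : C → Prop) : ℕ → C → C → Prop
  | zero {X : C} : SyzN 𝒜 0 X X
  | succ {n : ℕ} {Y' : C} (S : ShortComplex C) : S.ShortExact → 𝒜 S.X₂ → SyzN 𝒜 n S.X₁ Y' →
      SyzN 𝒜 (n + 1) S.X₃ Y'

theorem goodMap_of_isIso {𝒜 : C → Prop} (hadd : IsAdditiveClosed 𝒜) {X Y : C} (f : X ⟶ Y)
    [IsIso f] : GoodMap 𝒜 f := by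
  intro E e hE _
  exact hadd.iso (asIso (pullback.snd f e)).symm hE

theorem goodMap_step {𝒜 : C → Prop} (hadd : IsAdditiveClosed 𝒜) (hdef : DeflationClosed 𝒜)
    (S T : ShortComplex C) (hS : S.ShortExact) (hT : T.ShortExact) (φ : S ⟶ T)
    (hS2 : 𝒜 S.X₂) (hT2 : 𝒜 T.X₂) (h : GoodMap 𝒜 φ.τ₃) : GoodMap 𝒜 φ.τ₁ := by
  intro E' e' hE' he'
  have := hS.mono_f
  have := hT.mono_f
  have := hS.epi_g
  have := hT.epi_g
  have c12 := φ.comm₁₂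
  have c23 := φ.comm₂₃
  have hP := h _ T.g hT2 hT.epi_g
  have hz : biprod.lift (pullback.fst φ.τ₁ e' ≫ S.f) (-pullback.snd φ.τ₁ e') ≫
      biprod.desc (pullback.lift (f := φ.τ₃) (g := T.g) S.g φ.τ₂ c23.symm)
        (pullback.lift (f := φ.τ₃) (g := T.g) 0 (e' ≫ T.f) (by simp)) = 0 := by
    rw [biprod.lift_desc]
    apply pullback.hom_ext
    · simp [pullback.lift_fst]
    · have := pullback.condition (f := φ.τ₁) (g := e')
      simp [pullback.lift_snd, ← c12, reassoc_of% this]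
  refine hdef (ShortComplex.mk _ _ hz) ?_ (hadd.biprod hS2 hE') hP
  refine ShortComplex.ShortExact.mk' ?_ ?_ ?_
  · rw [ShortComplex.exact_iff_exact_up_to_refinements]
    intro A x hx
    dsimp at x hx ⊢
    have h1 : (x ≫ biprod.fst) ≫ S.g = 0 := by
      have := hx =≫ pullback.fst _ _
      simpa [biprod.desc_eq, pullback.lift_fst, pullback.lift_snd] using this
    have h2 : (x ≫ biprod.fst) ≫ φ.τ₂ + (x ≫ biprod.snd) ≫ e' ≫ T.f = 0 := by
      have := hx =≫ pullback.snd _ _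
      simpa [biprod.desc_eq, pullback.lift_fst, pullback.lift_snd] using this
    obtain ⟨k, hk⟩ := hS.exact.lift' _ h1
    refine ⟨A, 𝟙 A, inferInstance, pullback.lift k (-(x ≫ biprod.snd)) ?_, ?_⟩
    · rw [← cancel_mono T.f]
      rw [← hk] at h2
      simp only [Category.assoc, ← c12] at h2
      simpa using eq_neg_of_add_eq_zero_left h2
    · apply biprod.hom_ext <;> simp [hk, pullback.lift_fst_assoc, pullback.lift_snd]
  · refine ⟨fun u v huv => ?_⟩
    dsimp at u v huv
    apply pullback.hom_ext
    · rw [← cancel_mono S.f]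
      simpa using huv =≫ biprod.fst
    · simpa using huv =≫ biprod.snd
  · dsimp
    rw [epi_iff_surjective_up_to_refinements]
    intro A y
    obtain ⟨A1, π1, _, d, hd⟩ := surjective_up_to_refinements_of_epi S.g (y ≫ pullback.fst _ _)
    have h0 : (π1 ≫ y ≫ pullback.snd _ _ - d ≫ φ.τ₂) ≫ T.g = 0 := by
      simp only [Preadditive.sub_comp, Category.assoc, ← pullback.condition, c23]
      rw [reassoc_of% hd]; simp
    obtain ⟨k, hk⟩ := hT.exact.lift' _ h0
    obtain ⟨A2, π2, _, x, hx⟩ := surjective_up_to_refinements_of_epi e' k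
    refine ⟨A2, π2 ≫ π1, inferInstance, biprod.lift (π2 ≫ d) x, ?_⟩
    rw [biprod.lift_desc]
    apply pullback.hom_ext
    · simp [hd, pullback.lift_fst]
    · simp only [Category.assoc, Preadditive.add_comp, pullback.lift_snd]
      rw [← reassoc_of% hx, hk]; simp

theorem main_aux {𝒜 : C → Prop} (hadd : IsAdditiveClosed 𝒜) (hdef : DeflationClosed 𝒜)
    (hPR2 : PR2 𝒜) {n : ℕ} {Y₁ : C} (h1 : ResN 𝒜 n Y₁) :
    ∀ {X Y₂ Y' : C} (f₁ : X ⟶ Y₁) (f₂ : X ⟶ Y₂), GoodMap 𝒜 f₁ → GoodMap 𝒜 f₂ →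
      SyzN 𝒜 (n + 1) Y₂ Y' → 𝒜 Y' := by
  induction h1 with
  | @zero Y₁ hY =>
    intro X Y₂ Y' f₁ f₂ g1 g2 h2
    have hX : 𝒜 X := hadd.iso (asIso (pullback.fst f₁ (𝟙 Y₁))) (g1 _ (𝟙 _) hY inferInstance)
    cases h2 with
    | succ T hT hT2 h2 =>
      cases h2
      have := hT.mono_f
      have := hT.epi_g
      have hP := g2 _ T.g hT2 hT.epi_g
      have hz : pullback.lift (f := f₂) (g := T.g) 0 T.f (by simp) ≫ pullback.fst f₂ T.g = 0 :=
        pullback.lift_fst _ _ _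
      refine hdef (ShortComplex.mk _ _ hz) ?_ hP hX
      refine ShortComplex.ShortExact.mk' ?_ ?_ ?_
      · rw [ShortComplex.exact_iff_exact_up_to_refinements]
        intro A x hx
        dsimp at x hx ⊢
        obtain ⟨k, hk⟩ := hT.exact.lift' (x ≫ pullback.snd _ _) (by
          rw [Category.assoc, ← pullback.condition, reassoc_of% hx, zero_comp])
        refine ⟨A, 𝟙 A, inferInstance, k, ?_⟩
        apply pullback.hom_ext <;> simp [hk, hx, pullback.lift_fst, pullback.lift_snd]
      · dsimp
        apply mono_of_mono_fac (pullback.lift_snd (f := f₂) (g := T.g) 0 T.f (by simp))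
      · dsimp
        infer_instance
  | @succ n S hS hS2 h1 ih =>
    intro X Y₂ Y' f₁ f₂ g1 g2 h2
    cases h2 with
    | succ T hT hT2 h2 =>
      have := hS.epi_g
      have := hT.epi_g
      have := hS.mono_f
      have := hT.mono_f
      obtain ⟨D, p, hD, _⟩ := hPR2 (pullback (pullback.fst f₁ S.g) (pullback.fst f₂ T.g))
      let q : D ⟶ X := p ≫ pullback.fst _ _ ≫ pullback.fst _ _
      let U : ShortComplex C := ShortComplex.mk (kernel.ι q) q (kernel.condition q)
      have hU : U.ShortExact := ShortComplex.ShortExact.mk' (ShortComplex.exact_kernel q)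
        (by dsimp [U]; infer_instance) (by dsimp [U, q]; infer_instance)
      let a₁ : D ⟶ S.X₂ := p ≫ pullback.fst _ _ ≫ pullback.snd _ _
      let a₂ : D ⟶ T.X₂ := p ≫ pullback.snd _ _ ≫ pullback.snd _ _
      have e1 : a₁ ≫ S.g = q ≫ f₁ := by
        simp only [a₁, q, Category.assoc, ← pullback.condition (f := f₁)]
      have e2 : a₂ ≫ T.g = q ≫ f₂ := by
        simp only [a₂, q, Category.assoc, ← pullback.condition]
        rw [pullback.condition_assoc]
      obtain ⟨k₁, hk₁⟩ := hS.exact.lift' (kernel.ι q ≫ a₁) (by simp [e1])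
      obtain ⟨k₂, hk₂⟩ := hT.exact.lift' (kernel.ι q ≫ a₂) (by simp [e2])
      let φ₁ : U ⟶ S := { τ₁ := k₁, τ₂ := a₁, τ₃ := f₁, comm₁₂ := hk₁, comm₂₃ := e1 }
      let φ₂ : U ⟶ T := { τ₁ := k₂, τ₂ := a₂, τ₃ := f₂, comm₁₂ := hk₂, comm₂₃ := e2 }
      exact ih φ₁.τ₁ φ₂.τ₁ (goodMap_step hadd hdef U S hU hS φ₁ hD hS2 g1)
        (goodMap_step hadd hdef U T hU hT φ₂ hD hT2 g2) h2

theorem cycles_epi (K : CochainComplex C ℤ) {i j : ℤ} (hij : i + 1 = j) (h : K.ExactAt j) :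
    Epi (K.toCycles i j) := by
  subst hij
  rw [epi_iff_surjective_up_to_refinements]
  intro A y
  rw [K.exactAt_iff' i (i + 1) (i + 1 + 1) (by simp) (by simp)] at h
  obtain ⟨A', π, hπ, x, hx⟩ := h.exact_up_to_refinements (y ≫ K.iCycles (i + 1))
    ((Category.assoc _ _ _).trans (by
      erw [K.iCycles_d (i + 1) (i + 1 + 1)]; exact comp_zero))
  refine ⟨A', π, hπ, x, ?_⟩
  rw [← cancel_mono (K.iCycles (i + 1))]
  change A' ⟶ K.X i at x
  change π ≫ y ≫ K.iCycles (i + 1) = x ≫ K.d i (i + 1) at hx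
  rw [Category.assoc, hx, Category.assoc, K.toCycles_i]

/-- The short complex of cycles. -/
noncomputable abbrev cycSC (K : CochainComplex C ℤ) (i j : ℤ) : ShortComplex C :=
  ShortComplex.mk (K.iCycles i) (K.toCycles i j) (by
    rw [← cancel_mono (K.iCycles j)]; simp)

theorem cycSC_shortExact (K : CochainComplex C ℤ) {i j : ℤ} (hij : i + 1 = j) (h : K.ExactAt j) :
    (cycSC K i j).ShortExact := by
  refine ShortComplex.ShortExact.mk' ?_ (by dsimp; infer_instance) (cycles_epi K hij h)
  rw [ShortComplex.exact_iff_exact_up_to_refinements]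
  intro A x hx
  dsimp at x hx ⊢
  have hx' : x ≫ K.d i j = 0 := by
    rw [← K.toCycles_i i j, reassoc_of% hx, zero_comp]
  refine ⟨A, 𝟙 A, inferInstance, K.liftCycles x j (by simp [hij]) hx', ?_⟩
  rw [K.liftCycles_i, Category.id_comp]

theorem syz_of_acyclic {𝒜 : C → Prop} (E : CochainComplex C ℤ) (hterms : ∀ k : ℤ, 𝒜 (E.X k))
    (hacy : ∀ k : ℤ, E.ExactAt k) (m : ℕ) (k k' : ℤ) (hk : k + m = k') :
    SyzN 𝒜 m (E.cycles k') (E.cycles k) := by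
  induction m generalizing k' with
  | zero =>
    obtain rfl : k = k' := by simpa using hk
    exact .zero
  | succ m ih =>
    exact .succ (cycSC E (k' - 1) k') (cycSC_shortExact E (by simp) (hacy _)) (hterms _)
      (ih (k' - 1) (by push_cast at hk; lia))

theorem resN_of_resolution {𝒜 : C → Prop} (hadd : IsAdditiveClosed 𝒜) {n m : ℕ} (hmn : m ≤ n)
    (R : CochainComplex C ℤ)
    (hz : ∀ k : ℤ, k < -(m : ℤ) → IsZero (R.X k))
    (hA : ∀ k : ℤ, -(m : ℤ) ≤ k → k ≤ 0 → 𝒜 (R.X k))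
    (hR : ∀ k : ℤ, R.ExactAt k) (j : ℕ) (k : ℤ) (hk : k = -(n : ℤ) + j) (hk1 : k ≤ 1) :
    ResN 𝒜 j (R.cycles k) := by
  have hzero : ∀ {X : C}, IsZero X → 𝒜 X := fun hX => hadd.iso hX.isoZero.symm hadd.zero
  induction j generalizing k with
  | zero =>
    refine .zero (hzero ?_)
    have := cycles_epi R (i := k - 1) (j := k) (by simp) (hR _)
    exact IsZero.of_epi (R.toCycles (k - 1) k) (hz _ (by push_cast at hk; lia))
  | succ j ih =>
    refine .succ (cycSC R (k - 1) k) (cycSC_shortExact R (by simp) (hR _)) ?_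
      (ih (k - 1) (by push_cast at hk; lia) (by lia))
    by_cases h : k - 1 < -(m : ℤ)
    · exact hzero (hz _ h)
    · exact hA _ (by lia) (by lia)

theorem resolution_zero {𝒜 : C → Prop} (hadd : IsAdditiveClosed 𝒜) {Z : C} (hZ : 𝒜 Z) :
    IsResolutionOfLength 𝒜 Z 0 := by
  have h01 : (ComplexShape.up ℤ).Rel 0 1 := by simp
  let R : CochainComplex C ℤ := HomologicalComplex.double (𝟙 Z) h01
  have hd : IsIso (R.d 0 1) := by
    dsimp only [R]
    rw [HomologicalComplex.double_d _ _ (by simp)]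
    infer_instance
  refine ⟨R, HomologicalComplex.doubleXIso₁ (𝟙 Z) h01 (by simp), ?_, ?_, ?_, ?_⟩
  · intro k hk
    exact HomologicalComplex.isZero_double_X _ _ _ (by lia) (by lia)
  · intro k hk
    exact HomologicalComplex.isZero_double_X _ _ _ (by push_cast at hk; lia)
      (by push_cast at hk; lia)
  · intro k hk hk'
    obtain rfl : k = 0 := by push_cast at hk; lia
    exact hadd.iso (HomologicalComplex.doubleXIso₀ (𝟙 Z) h01).symm hZ
  · intro k
    by_cases h0 : k = 0
    · subst h0
      rw [R.exactAt_iff' (-1) 0 1 (by simp) (by simp),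
        ShortComplex.exact_iff_mono _ (HomologicalComplex.double_d_eq_zero₀ (𝟙 Z) h01 _ _ (by simp))]
      change Mono (R.d 0 1); infer_instance
    · by_cases h1 : k = 1
      · subst h1
        rw [R.exactAt_iff' 0 1 2 (by simp) (by simp),
          ShortComplex.exact_iff_epi _ (HomologicalComplex.double_d_eq_zero₀ (𝟙 Z) h01 _ _ (by simp))]
        change Epi (R.d 0 1); infer_instance
      · exact .of_isZero (HomologicalComplex.isZero_double_X _ _ _ h0 h1)

theorem exists_resolution {𝒜 : C → Prop} {n : ℕ} (hres : resdimCat 𝒜 = (n : ℕ∞)) (Z : C) :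
    ∃ m : ℕ, m ≤ n ∧ IsResolutionOfLength 𝒜 Z m := by
  have h : resdim 𝒜 Z ≤ n := hres ▸ le_iSup (fun E : C => resdim 𝒜 E) Z
  have h2 : resdim 𝒜 Z < (n : ℕ∞) + 1 := lt_of_le_of_lt h (by exact_mod_cast Nat.lt_succ_self n)
  obtain ⟨_, ⟨m, rfl, hm⟩, hlt⟩ := sInf_lt_iff.1 h2
  exact ⟨m, by exact_mod_cast Order.le_of_lt_add_one hlt, hm⟩

/-- If `𝒜` is preresolving with `resdim_𝒜 (C) = n` finite and `E•` is an acyclic cochain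
complex with all terms in `𝒜`, then for every `l` there is `B ∈ 𝒜` with
`im(d_E^l) ⊞ B ∈ 𝒜`; in particular `resdim_𝒜 (im(d_E^l)) ≤ 1`. -/
theorem image_resdim_le_one_of_acyclic
    (𝒜 : C → Prop) (hadd : IsAdditiveClosed 𝒜)
    (hdef : DeflationClosed 𝒜) (hPR2 : PR2 𝒜)
    (n : ℕ) (hres : resdimCat 𝒜 = (n : ℕ∞))
    (E : CochainComplex C ℤ) (hterms : ∀ k : ℤ, 𝒜 (E.X k))
    (hacy : ∀ k : ℤ, E.ExactAt k) (l : ℤ) :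
    (∃ B : C, 𝒜 B ∧ 𝒜 (image (E.d l (l + 1)) ⊞ B)) ∧
      resdim 𝒜 (image (E.d l (l + 1))) ≤ (1 : ℕ∞) := by
  have hZ : 𝒜 (E.cycles (l + 1)) := by
    obtain ⟨m, hmn, R, iso, hR1, hz, hA, hR⟩ :=
      exists_resolution hres (E.cycles (l + 1 + (n + 2 : ℕ)))
    have hr := resN_of_resolution hadd hmn R hz hA hR (n + 1) 1 (by push_cast; lia) le_rfl
    have hs := syz_of_acyclic E hterms hacy (n + 2) (l + 1) _ rfl
    have hi : IsIso (R.iCycles 1) :=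
      R.isIso_iCycles 1 2 (by simp) ((hR1 2 (by simp)).eq_of_tgt _ _)
    exact main_aux hadd hdef hPR2 hr (iso.inv ≫ inv (R.iCycles 1)) (𝟙 _)
      (goodMap_of_isIso hadd _) (goodMap_of_isIso hadd _) hs
  have := cycles_epi E (i := l) rfl (hacy (l + 1))
  have : StrongEpi (E.toCycles l (l + 1)) := strongEpi_of_epi _
  have hI : 𝒜 (image (E.d l (l + 1))) :=
    hadd.iso (image.isoStrongEpiMono (E.toCycles l (l + 1)) (E.iCycles (l + 1)) (by simp)) hZ
  refine ⟨⟨0, hadd.zero, hadd.biprod hI hadd.zero⟩, ?_⟩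
  have h0 : resdim 𝒜 (image (E.d l (l + 1))) ≤ ((0 : ℕ) : ℕ∞) :=
    sInf_le ⟨0, rfl, resolution_zero hadd hI⟩
  exact h0.trans (by simp)
end

section
/- Let 𝒞 be an abelian category and let 𝒜 be a full additive subcategory of 𝒞. If 0 → K → B →^g C → 0 and 0 → L → A →^h B → 0 are 𝒜-conflations, then the composite epimorphism g ∘ h : A ↠ C has its kernel P in 𝒜, and the short exact sequence 0 → P → A → C → 0 is again an 𝒜-conflation. (In particular, the 𝒜-conflations define a deflation-exact structure on 𝒜.) -/
open CategoryTheory CategoryTheory.Limits ZeroObject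

universe v u

variable {C : Type u} [Category.{v} C] [Abelian C]

/-- A short exact sequence `0 → A → B → C → 0` in `C` with all terms in `𝒜` is an
`𝒜`-conflation if for every morphism `h : D ⟶ C` with `D ∈ 𝒜`, the pullback of the
epimorphism along `h` lies in `𝒜`. -/
def IsAConflation (𝒜 : C → Prop) (S : ShortComplex C) : Prop :=
  S.ShortExact ∧ 𝒜 S.X₁ ∧ 𝒜 S.X₂ ∧ 𝒜 S.X₃ ∧
    ∀ (D : C) (h : D ⟶ S.X₃), 𝒜 D → 𝒜 (pullback S.g h)

/-- Compositions of `𝒜`-deflations are `𝒜`-deflations: given `𝒜`-conflations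
`0 → K → B → C → 0` (with deflation `g`) and `0 → L → A → B → 0` (with deflation `h`),
the kernel `P` of `h ≫ g` lies in `𝒜` and `0 → P → A → C → 0` is again an
`𝒜`-conflation.  (Hence the `𝒜`-conflations form a deflation-exact structure on `𝒜`.) -/
theorem isAConflation_comp
    (𝒜 : C → Prop) (hadd : IsAdditiveClosed 𝒜)
    {K B Z L A : C} (iK : K ⟶ B) (g : B ⟶ Z) (w₁ : iK ≫ g = 0)
    (iL : L ⟶ A) (h : A ⟶ B) (w₂ : iL ≫ h = 0)
    (h₁ : IsAConflation 𝒜 (ShortComplex.mk iK g w₁))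
    (h₂ : IsAConflation 𝒜 (ShortComplex.mk iL h w₂)) :
    𝒜 (kernel (h ≫ g)) ∧
      IsAConflation 𝒜
        (ShortComplex.mk (kernel.ι (h ≫ g)) (h ≫ g) (kernel.condition (h ≫ g))) := by
  obtain ⟨e₁, -, -, hZ, p₁⟩ := h₁
  obtain ⟨e₂, -, hA, -, p₂⟩ := h₂
  have key : ∀ (D : C) (d : D ⟶ Z), 𝒜 D → 𝒜 (pullback (h ≫ g) d) := by
    intro D d hD
    have h3 : 𝒜 (pullback h (pullback.fst g d)) := p₂ _ (pullback.fst g d) (p₁ D d hD)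
    have sq := (IsPullback.of_hasPullback h (pullback.fst g d)).paste_vert
      (IsPullback.of_hasPullback g d)
    exact hadd.iso sq.isoPullback h3
  have hk : 𝒜 (kernel (h ≫ g)) := by
    have h0 := key 0 0 hadd.zero
    have sq : IsPullback (kernel.ι (h ≫ g)) (0 : kernel (h ≫ g) ⟶ (0 : C)) (h ≫ g) 0 := by
      refine ⟨⟨by simp⟩, ⟨PullbackCone.IsLimit.mk _ (fun s => kernel.lift _ s.fst
        (by rw [s.condition]; simp)) (fun s => by simp)
        (fun s => (isZero_zero C).eq_of_tgt _ _) (fun s m hm _ => ?_)⟩⟩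
      rw [← cancel_mono (kernel.ι (h ≫ g)), hm]; simp
    exact hadd.iso sq.isoPullback.symm h0
  have : Epi g := e₁.epi_g
  have : Epi h := e₂.epi_g
  have : Epi (h ≫ g) := epi_comp _ _
  refine ⟨hk, ?_, hk, hA, hZ, key⟩
  exact { exact := ShortComplex.exact_of_f_is_kernel _ (kernelIsKernel (h ≫ g))
          mono_f := inferInstanceAs (Mono (kernel.ι (h ≫ g)))
          epi_g := this }
end

section
/- Let 𝒞 be an abelian category and let 𝒜 be a full additive subcategory satisfying (C2'). Then for every short exact sequence 0 → X → Y → Z → 0 in 𝒞 with Y and Z in 𝒜, there exists an object B in 𝒜 such that X ⊕ B lies in 𝒜. -/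
open CategoryTheory CategoryTheory.Limits ZeroObject

universe v u

variable {C : Type u} [Category.{v} C] [Abelian C]

/-- Axiom (C2'): every short exact sequence `0 → X → Y → C → 0` with `C ∈ 𝒜` receives a
morphism from an `𝒜`-conflation `0 → A → B → C → 0` over the identity of `C`. -/
def C2' (𝒜 : C → Prop) : Prop :=
  ∀ ⦃X Y Z : C⦄ (i : X ⟶ Y) (p : Y ⟶ Z) (w : i ≫ p = 0),
    (ShortComplex.mk i p w).ShortExact → 𝒜 Z →
    ∃ (A B : C) (i' : A ⟶ B) (p' : B ⟶ Z) (w' : i' ≫ p' = 0)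
      (a : A ⟶ X) (b : B ⟶ Y),
      IsAConflation 𝒜 (ShortComplex.mk i' p' w') ∧ i' ≫ b = a ≫ i ∧ b ≫ p = p'

/-- If `𝒜` satisfies (C2'), then for every short exact sequence `0 → X → Y → Z → 0` with
`Y, Z ∈ 𝒜` there is `B ∈ 𝒜` with `X ⊞ B ∈ 𝒜`. -/
theorem exists_biprod_mem_of_C2'
    (𝒜 : C → Prop) (hadd : IsAdditiveClosed 𝒜) (hC2 : C2' 𝒜)
    {X Y Z : C} (i : X ⟶ Y) (p : Y ⟶ Z) (w : i ≫ p = 0)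
    (hse : (ShortComplex.mk i p w).ShortExact) (hY : 𝒜 Y) (hZ : 𝒜 Z) :
    ∃ B : C, 𝒜 B ∧ 𝒜 (X ⊞ B) := by
  obtain ⟨A, B, i', p', w', a, b, ⟨-, -, hB, -, hpb⟩, -, hb⟩ := hC2 i p w hse hZ
  refine ⟨B, hB, ?_⟩
  have : Mono i := hse.mono_f
  let k : pullback p' p ⟶ Y := pullback.snd p' p - pullback.fst p' p ≫ b
  have hk : k ≫ p = 0 := by
    simp [k, hb, pullback.condition]
  obtain ⟨l, hl⟩ : ∃ l : pullback p' p ⟶ X, l ≫ i = k :=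
    ⟨hse.exact.lift k hk, hse.exact.lift_f k hk⟩
  obtain ⟨u, huf, hus⟩ : ∃ u : X ⟶ pullback p' p,
      u ≫ pullback.fst p' p = 0 ∧ u ≫ pullback.snd p' p = i :=
    ⟨pullback.lift 0 i (by simp [w]), pullback.lift_fst _ _ _, pullback.lift_snd _ _ _⟩
  obtain ⟨s, hsf, hss⟩ : ∃ s : B ⟶ pullback p' p,
      s ≫ pullback.fst p' p = 𝟙 B ∧ s ≫ pullback.snd p' p = b :=
    ⟨pullback.lift (𝟙 B) b (by simp [hb]), pullback.lift_fst _ _ _, pullback.lift_snd _ _ _⟩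
  have hul : u ≫ l = 𝟙 X := by
    rw [← cancel_mono i, Category.assoc, hl]; simp [k, hus, reassoc_of% huf]
  have hsl : s ≫ l = 0 := by
    rw [← cancel_mono i, Category.assoc, hl]; simp [k, hss, reassoc_of% hsf]
  refine hadd.iso (X := pullback p' p)
    ⟨biprod.lift l (pullback.fst p' p), biprod.desc u s, ?_, ?_⟩ (hpb Y p hY)
  · rw [biprod.lift_desc]
    apply pullback.hom_ext
    · simp [huf, hsf]
    · simp [hus, hss, hl, k]
  · apply biprod.hom_ext' <;> apply biprod.hom_ext <;> simp [hul, hsl, huf, hsf]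
end

section
/- Let 𝒞 be an abelian category and let 𝒜 be a full additive subcategory satisfying (C2'). Then for every short exact sequence 0 → X →^i Y →^p Z → 0 in 𝒞 with X, Y and Z in 𝒜, there exists an object B in 𝒜 such that the short exact sequence 0 → X ⊕ B →^{diag(i, 1_B)} Y ⊕ B →^{(p, 0)} Z → 0 is an 𝒜-conflation. -/
open CategoryTheory CategoryTheory.Limits ZeroObject

universe v u

variable {C : Type u} [Category.{v} C] [Abelian C]

/-- If `𝒜` satisfies (C2'), then for every short exact sequence `0 → X → Y → Z → 0` with
`X, Y, Z ∈ 𝒜` there is `B ∈ 𝒜` such that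
`0 → X ⊞ B → Y ⊞ B → Z → 0` (with maps `i ⊞ 𝟙 B` and `(p, 0)`) is an `𝒜`-conflation. -/
theorem exists_biprod_isAConflation_of_C2'
    (𝒜 : C → Prop) (hadd : IsAdditiveClosed 𝒜) (hC2 : C2' 𝒜)
    {X Y Z : C} (i : X ⟶ Y) (p : Y ⟶ Z) (w : i ≫ p = 0)
    (hse : (ShortComplex.mk i p w).ShortExact)
    (hX : 𝒜 X) (hY : 𝒜 Y) (hZ : 𝒜 Z) :
    ∃ B : C, 𝒜 B ∧
      IsAConflation 𝒜
        (ShortComplex.mk (biprod.map i (𝟙 B)) (biprod.desc p 0)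
          (by apply biprod.hom_ext' <;> simp [reassoc_of% w, w])) := by
  obtain ⟨A, B, i', p', w', a, b, ⟨hS, hA, hB, -, hpb⟩, hab, hbp⟩ := hC2 i p w hse hZ
  have : Mono i := hse.mono_f
  have : Epi p := hse.epi_g
  refine ⟨B, hB, { exact := ?_, mono_f := ?_, epi_g := ?_ }, hadd.biprod hX hB, hadd.biprod hY hB, hZ, ?_⟩
  · apply ShortComplex.exact_of_f_is_kernel
    refine KernelFork.IsLimit.ofι' _ _ (fun {W} k hk => ?_)
    dsimp at k hk ⊢
    have hk' : (k ≫ biprod.fst) ≫ p = 0 := by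
      rw [← hk]
      simp [biprod.desc_eq]
    refine ⟨biprod.lift (hse.exact.lift (k ≫ biprod.fst) hk') (k ≫ biprod.snd), ?_⟩
    have := hse.exact.lift_f (k ≫ biprod.fst) hk'
    dsimp at this
    apply biprod.hom_ext
    · simpa using this
    · simp
  · dsimp
    infer_instance
  · dsimp
    have : Epi ((biprod.inl : Y ⟶ Y ⊞ B) ≫ biprod.desc p (0 : B ⟶ Z)) := by
      rw [biprod.inl_desc]; infer_instance
    exact epi_of_epi (biprod.inl : Y ⟶ Y ⊞ B) _
  · intro D h hD
    dsimp at h ⊢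
    have key := hpb (D ⊞ Y) (biprod.desc h (-p)) (hadd.biprod hD hY)
    dsimp at key
    have c1 := pullback.condition (f := p') (g := biprod.desc h (-p))
    have c2 := pullback.condition (f := biprod.desc p (0 : B ⟶ Z)) (g := h)
    simp only [biprod.desc_eq, Preadditive.comp_add, Preadditive.comp_neg, comp_zero,
      add_zero] at c1 c2
    obtain ⟨f, hf1, hf2⟩ : ∃ f : pullback p' (biprod.desc h (-p)) ⟶
        pullback (biprod.desc p (0 : B ⟶ Z)) h,
        f ≫ pullback.fst _ _ = biprod.lift
          (pullback.snd _ _ ≫ biprod.snd + pullback.fst _ _ ≫ b) (pullback.fst _ _) ∧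
        f ≫ pullback.snd _ _ = pullback.snd _ _ ≫ biprod.fst := by
      refine ⟨pullback.lift _ _ ?_, pullback.lift_fst _ _ _, pullback.lift_snd _ _ _⟩
      simp only [biprod.lift_desc, Preadditive.add_comp, Category.assoc, hbp, comp_zero,
        add_zero, c1]
      simp
    obtain ⟨g, hg1, hg2⟩ : ∃ g : pullback (biprod.desc p (0 : B ⟶ Z)) h ⟶
        pullback p' (biprod.desc h (-p)),
        g ≫ pullback.fst _ _ = pullback.fst _ _ ≫ biprod.snd ∧
        g ≫ pullback.snd _ _ = biprod.lift (pullback.snd _ _)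
          (pullback.fst _ _ ≫ biprod.fst - pullback.fst _ _ ≫ biprod.snd ≫ b) := by
      refine ⟨pullback.lift _ _ ?_, pullback.lift_fst _ _ _, pullback.lift_snd _ _ _⟩
      simp only [biprod.lift_desc, Preadditive.sub_comp, Preadditive.comp_neg, Category.assoc,
        hbp, ← c2]
      simp
    refine hadd.iso ⟨f, g, ?_, ?_⟩ key
    · apply pullback.hom_ext
      · simp [hg1, reassoc_of% hf1]
      · apply biprod.hom_ext <;> simp [hg2, hf2, reassoc_of% hf1]
    · apply pullback.hom_ext
      · apply biprod.hom_ext <;> simp [hf1, hg1, reassoc_of% hg1, reassoc_of% hg2]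
      · simp [hf2, reassoc_of% hg2]
end

section
/- Let 𝒞 be an abelian category and let 𝒜 be a full additive subcategory satisfying (C2'). Then every bounded-above cochain complex E• with all terms in 𝒜 which is acyclic in 𝒞 is homotopy equivalent to a bounded-above acyclic cochain complex A• all of whose terms and all of whose images of differentials lie in 𝒜. -/
open CategoryTheory CategoryTheory.Limits ZeroObject

universe v u

variable {C : Type u} [Category.{v} C] [Abelian C]

/-- Pullback of a short exact sequence along a lifting map splits. -/
theorem aux_pullback_iso {X Y Z B : C} (i : X ⟶ Y) (p : Y ⟶ Z) (w : i ≫ p = 0)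
    (hS : (ShortComplex.mk i p w).ShortExact) (q : B ⟶ Z) (b : B ⟶ Y) (hb : b ≫ p = q) :
    Nonempty (pullback q p ≅ X ⊞ B) := by
  have hm : Mono i := hS.mono_f
  have key : (pullback.snd q p - pullback.fst q p ≫ b) ≫ p = 0 := by
    simp [hb, pullback.condition]
  obtain ⟨l, hl⟩ : ∃ l : pullback q p ⟶ X, l ≫ i = pullback.snd q p - pullback.fst q p ≫ b :=
    ⟨hS.exact.lift _ key, hS.exact.lift_f _ key⟩
  obtain ⟨r, hr1, hr2⟩ : ∃ r : X ⟶ pullback q p,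
      r ≫ pullback.fst q p = 0 ∧ r ≫ pullback.snd q p = i :=
    ⟨pullback.lift 0 i (by simp [w]), pullback.lift_fst _ _ _, pullback.lift_snd _ _ _⟩
  obtain ⟨t, ht1, ht2⟩ : ∃ t : B ⟶ pullback q p,
      t ≫ pullback.fst q p = 𝟙 B ∧ t ≫ pullback.snd q p = b :=
    ⟨pullback.lift (𝟙 B) b (by simp [hb]), pullback.lift_fst _ _ _, pullback.lift_snd _ _ _⟩
  refine ⟨⟨biprod.lift l (pullback.fst q p), biprod.desc r t, ?_, ?_⟩⟩
  · apply pullback.hom_ext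
    · simp [biprod.lift_desc, hr1, ht1]
    · simp [biprod.lift_desc, hl, hr2, ht2]
  · apply biprod.hom_ext
    · rw [← cancel_mono i]
      apply biprod.hom_ext' <;> simp [hl, hr2, ht2, reassoc_of% hr1, reassoc_of% ht1]
    · apply biprod.hom_ext' <;> simp [hr1, ht1]

theorem aux_step (𝒜 : C → Prop) (hadd : IsAdditiveClosed 𝒜) (hC2 : C2' 𝒜)
    {X Y Z : C} (f : X ⟶ Y) (g : Y ⟶ Z) (w : f ≫ g = 0) (hex : (ShortComplex.mk f g w).Exact)
    (hY : 𝒜 Y) (B : C) (hB : 𝒜 B) (hI : 𝒜 (image g ⊞ B)) :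
    ∃ B' : C, 𝒜 B' ∧ 𝒜 (image f ⊞ B') := by
  have w1 : image.ι f ≫ g = 0 := by
    rw [← cancel_epi (factorThruImage f)]; simp [w]
  have w2 : image.ι f ≫ factorThruImage g = 0 := by
    rw [← cancel_mono (image.ι g)]; simp [w1]
  let i : image f ⟶ Y ⊞ B := image.ι f ≫ biprod.inl
  let p : Y ⊞ B ⟶ image g ⊞ B := biprod.map (factorThruImage g) (𝟙 B)
  have wip : i ≫ p = 0 := by simp [i, p, reassoc_of% w2]
  have hm : Mono i := mono_comp _ _
  have hp : Epi p := by dsimp [p]; infer_instance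
  have hS : (ShortComplex.mk i p wip).ShortExact := by
    refine ⟨?_⟩
    rw [ShortComplex.exact_iff_exact_up_to_refinements] at hex ⊢
    intro T x hx
    dsimp at x hx
    have h1 : (x ≫ biprod.fst) ≫ g = 0 := by
      have := hx =≫ (biprod.fst ≫ image.ι g)
      simpa [p] using this
    have h2 : x ≫ biprod.snd = 0 := by
      have := hx =≫ biprod.snd
      simpa [p] using this
    obtain ⟨T', π, hπ, y, hy⟩ := hex (x ≫ biprod.fst) h1
    refine ⟨T', π, hπ, y ≫ factorThruImage f, ?_⟩
    dsimp at hy ⊢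
    apply biprod.hom_ext
    · simp [i, hy]
    · simp [i, h2]
  obtain ⟨A', B', i', p', w', a, b, hconf, -, hb⟩ := hC2 i p wip hS hI
  obtain ⟨e⟩ := aux_pullback_iso i p wip hS p' b hb
  exact ⟨B', hconf.2.2.1, hadd.iso e (hconf.2.2.2.2 _ p (hadd.biprod hY hB))⟩

/-- The contractible complex with terms `B k ⊞ B (k+1)`. -/
noncomputable def auxK (B : ℤ → C) : CochainComplex C ℤ where
  X k := B k ⊞ B (k + 1)
  d i j := if h : i + 1 = j then biprod.snd ≫ eqToHom (by rw [h]) ≫ biprod.inl else 0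
  shape i j h := dif_neg h
  d_comp_d' i j k h1 h2 := by
    have h1 : i + 1 = j := h1
    have h2 : j + 1 = k := h2
    subst h1; subst h2
    simp

noncomputable def auxFst (B : ℤ → C) (k : ℤ) : (auxK B).X k ⟶ B k :=
  (biprod.fst : B k ⊞ B (k+1) ⟶ B k)

noncomputable def auxSnd (B : ℤ → C) (k : ℤ) : (auxK B).X k ⟶ B (k+1) :=
  (biprod.snd : B k ⊞ B (k+1) ⟶ B (k+1))

noncomputable def auxInl (B : ℤ → C) (k : ℤ) : B k ⟶ (auxK B).X k :=
  (biprod.inl : B k ⟶ B k ⊞ B (k+1))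

noncomputable def auxInr (B : ℤ → C) (k : ℤ) : B (k+1) ⟶ (auxK B).X k :=
  (biprod.inr : B (k+1) ⟶ B k ⊞ B (k+1))

theorem auxInl_fst (B : ℤ → C) (k : ℤ) : auxInl B k ≫ auxFst B k = 𝟙 _ :=
  biprod.inl_fst

theorem auxInr_snd (B : ℤ → C) (k : ℤ) : auxInr B k ≫ auxSnd B k = 𝟙 _ :=
  biprod.inr_snd

theorem aux_total (B : ℤ → C) (k : ℤ) :
    auxFst B k ≫ auxInl B k + auxSnd B k ≫ auxInr B k = 𝟙 _ :=
  biprod.total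

theorem auxK_d (B : ℤ → C) (k : ℤ) :
    (auxK B).d k (k + 1) = auxSnd B k ≫ auxInl B (k+1) := by
  simp [auxK, auxSnd, auxInl]

noncomputable def auxKh (B : ℤ → C) (i j : ℤ) (h : (ComplexShape.up ℤ).Rel j i) :
    (auxK B).X i ⟶ (auxK B).X j :=
  auxFst B i ≫ eqToHom (by rw [show j + 1 = i from h]) ≫ auxInr B j

theorem auxKh_eq (B : ℤ → C) (j : ℤ) (h : (ComplexShape.up ℤ).Rel j (j+1)) :
    auxKh B (j+1) j h = auxFst B (j+1) ≫ auxInr B j := by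
  simp [auxKh]

theorem auxK_id (B : ℤ → C) : Homotopy.nullHomotopicMap' (auxKh B) = 𝟙 (auxK B) := by
  ext k
  obtain ⟨k, rfl⟩ : ∃ m, k = m + 1 := ⟨k - 1, by ring⟩
  rw [Homotopy.nullHomotopicMap'_f (k₂ := k) (k₁ := k + 1) (k₀ := k + 1 + 1) (by simp) (by simp)]
  rw [auxK_d, auxK_d, auxKh_eq, auxKh_eq, HomologicalComplex.id_f, ← aux_total]
  simp only [Category.assoc, reassoc_of% auxInl_fst, reassoc_of% auxInr_snd]
  exact add_comm _ _

noncomputable def auxKHomotopy (B : ℤ → C) : Homotopy (𝟙 (auxK B)) 0 :=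
  (Homotopy.ofEq (auxK_id B).symm).trans (Homotopy.nullHomotopy' (auxKh B))

noncomputable def auxEquiv (E : CochainComplex C ℤ) (B : ℤ → C) :
    HomotopyEquiv E (E ⊞ auxK B) where
  hom := biprod.inl
  inv := biprod.fst
  homotopyHomInvId := Homotopy.ofEq (by simp)
  homotopyInvHomId := by
    have h1 : Homotopy (biprod.snd ≫ 𝟙 (auxK B) ≫ biprod.inr : E ⊞ auxK B ⟶ E ⊞ auxK B)
        (biprod.snd ≫ 0 ≫ biprod.inr) :=
      ((auxKHomotopy B).compRight _).compLeft _
    have h2 := (Homotopy.refl (biprod.fst ≫ biprod.inl : E ⊞ auxK B ⟶ E ⊞ auxK B)).add h1.symm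
    exact (Homotopy.ofEq (by simp)).trans (h2.trans (Homotopy.ofEq (by simp [biprod.total])))

theorem aux_image (E : CochainComplex C ℤ) (B : ℤ → C) (k : ℤ) :
    Nonempty (image (E.d k (k+1)) ⊞ B (k+1) ≅ image ((E ⊞ auxK B).d k (k+1))) := by
  have h1 : Epi (auxSnd B k) := (SplitEpi.mk _ (auxInr_snd B k)).epi
  have h2 : Mono (auxInl B (k+1)) := (SplitMono.mk _ (auxInl_fst B (k+1))).mono
  let e' : E.X k ⊞ (auxK B).X k ⟶ image (E.d k (k+1)) ⊞ B (k+1) :=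
    biprod.map (factorThruImage _) (auxSnd B k)
  let m' : image (E.d k (k+1)) ⊞ B (k+1) ⟶ E.X (k+1) ⊞ (auxK B).X (k+1) :=
    biprod.map (image.ι _) (auxInl B (k+1))
  have he' : Epi e' := by dsimp only [e']; infer_instance
  have hm' : Mono m' := by dsimp only [m']; infer_instance
  let e := (HomologicalComplex.biprodXIso E (auxK B) k).hom ≫ e'
  let m := m' ≫ (HomologicalComplex.biprodXIso E (auxK B) (k+1)).inv
  have he : Epi e := epi_comp _ _
  have hm : Mono m := mono_comp _ _
  have hem : e ≫ m = (E ⊞ auxK B).d k (k+1) := by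
    rw [← cancel_mono (HomologicalComplex.biprodXIso E (auxK B) (k+1)).hom]
    simp only [e, m, Category.assoc, Iso.inv_hom_id, Category.comp_id]
    apply biprod.hom_ext
    · simp [e', m']
    · simp [e', m']
      rw [← auxK_d, HomologicalComplex.Hom.comm]
  have : StrongEpi e := strongEpi_of_epi e
  exact ⟨image.isoStrongEpiMono e m hem⟩

theorem aux_B (𝒜 : C → Prop) (hadd : IsAdditiveClosed 𝒜) (hC2 : C2' 𝒜)
    (E : CochainComplex C ℤ) (b : ℤ) (hb : ∀ k : ℤ, b < k → IsZero (E.X k))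
    (hterms : ∀ k : ℤ, 𝒜 (E.X k)) (hacy : ∀ k : ℤ, E.ExactAt k) (k : ℤ) :
    ∃ B : C, 𝒜 B ∧ 𝒜 (image (E.d k (k+1)) ⊞ B) ∧ (b ≤ k → IsZero B) := by
  have big : ∀ k, b ≤ k → ∃ B : C, 𝒜 B ∧ 𝒜 (image (E.d k (k+1)) ⊞ B) ∧ (b ≤ k → IsZero B) := by
    intro k hk
    have hz : IsZero (image (E.d k (k+1))) := 
      (hb (k+1) (by lia)).of_mono (image.ι _)
    exact ⟨0, hadd.zero, hadd.biprod (hadd.iso (hz.isoZero).symm hadd.zero) hadd.zero,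
      fun _ => isZero_zero _⟩
  have small : ∀ n : ℕ, ∃ B : C, 𝒜 B ∧ 𝒜 (image (E.d (b - n) (b - n+1)) ⊞ B) := by
    intro n
    induction n with
    | zero =>
      obtain ⟨B, h1, h2, -⟩ := big (b - (0 : ℕ)) (by simp)
      exact ⟨B, h1, h2⟩
    | succ n ih =>
      obtain ⟨B, h1, h2⟩ := ih
      obtain ⟨k, hk⟩ : ∃ k : ℤ, k = b - ((n + 1 : ℕ) : ℤ) := ⟨_, rfl⟩
      have hk' : b - (n : ℤ) = k + 1 := by rw [hk]; push_cast; ring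
      rw [← hk]
      rw [hk'] at h2
      refine aux_step 𝒜 hadd hC2 (E.d k (k+1)) (E.d (k+1) (k+1+1)) (by simp) ?_
        (hterms _) B h1 h2
      exact (E.exactAt_iff' k (k+1) (k+1+1) (by simp) (by simp)).1 (hacy _)
  by_cases h : b ≤ k
  · exact big k h
  · obtain ⟨n, hn⟩ : ∃ n : ℕ, k = b - n := ⟨(b - k).toNat, by lia⟩
    subst hn
    obtain ⟨B, h1, h2⟩ := small n
    exact ⟨B, h1, h2, fun h' => absurd h' h⟩

/-- If `𝒜` satisfies (C2'), then every bounded-above acyclic cochain complex with all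
terms in `𝒜` is homotopy equivalent to a bounded-above acyclic cochain complex all of
whose terms and all of whose images of differentials lie in `𝒜`. -/
theorem homotopyEquiv_acyclic_of_C2'
    (𝒜 : C → Prop) (hadd : IsAdditiveClosed 𝒜) (hC2 : C2' 𝒜)
    (E : CochainComplex C ℤ) (b : ℤ) (hb : ∀ k : ℤ, b < k → IsZero (E.X k))
    (hterms : ∀ k : ℤ, 𝒜 (E.X k)) (hacy : ∀ k : ℤ, E.ExactAt k) :
    ∃ (A : CochainComplex C ℤ) (b' : ℤ),
      (∀ k : ℤ, b' < k → IsZero (A.X k)) ∧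
      (∀ k : ℤ, 𝒜 (A.X k)) ∧
      (∀ k : ℤ, A.ExactAt k) ∧
      (∀ k : ℤ, 𝒜 (image (A.d k (k + 1)))) ∧
      Nonempty (HomotopyEquiv E A) := by
  choose B hB1 hB2 hB3 using aux_B 𝒜 hadd hC2 E b hb hterms hacy
  let B' : ℤ → C := fun k => B (k - 1)
  have hz : ∀ k, b < k → IsZero (B' k) := fun k hk => hB3 (k - 1) (by lia)
  have hB' : ∀ k, 𝒜 (image (E.d k (k+1)) ⊞ B' (k+1)) := by
    intro k
    have := hB2 k
    have h2 : B' (k+1) = B k := by simp [B']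
    rw [h2]; exact this
  refine ⟨E ⊞ auxK B', b, ?_, ?_, ?_, ?_, ⟨auxEquiv E B'⟩⟩
  · intro k hk
    refine IsZero.of_iso ?_ (HomologicalComplex.biprodXIso E (auxK B') k)
    have hK : IsZero ((auxK B').X k) :=
      (biprod_isZero_iff _ _).2 ⟨hz k hk, hz (k+1) (by lia)⟩
    exact (biprod_isZero_iff _ _).2 ⟨hb k hk, hK⟩
  · intro k
    exact hadd.iso (HomologicalComplex.biprodXIso E (auxK B') k).symm
      (hadd.biprod (hterms k) (hadd.biprod (hB1 _) (hB1 _)))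
  · intro k
    exact (exactAt_iff_of_quasiIsoAt (auxEquiv E B').hom k).1 (hacy k)
  · intro k
    obtain ⟨e⟩ := aux_image E B' k
    exact hadd.iso e (hB' k)
end

section
/- Let p be a prime number. For every abelian group M there exist an abelian group A containing no element of order p² and a surjective group homomorphism f : A → M whose kernel contains no element of order p². Hence the Isbell category ℐ is a preresolving subcategory of Ab with resdim_ℐ(Ab) ≤ 1. -/
universe u

/-- For every abelian group `M` there exist an abelian group `A` with no element of
(additive) order `p²` and a surjective group homomorphism `f : A → M` whose kernel has
no element of order `p²`.  Hence the Isbell category `ℐ` (abelian groups with no element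
of order `p²`) is a preresolving subcategory of `Ab` with `resdim_ℐ (Ab) ≤ 1`. -/
theorem isbell_preresolving (p : ℕ) (hp : p.Prime)
    (M : Type u) [AddCommGroup M] :
    ∃ (A : Type u) (_ : AddCommGroup A) (f : A →+ M),
      Function.Surjective f ∧
      (∀ a : A, addOrderOf a ≠ p ^ 2) ∧
      (∀ a : A, f a = 0 → addOrderOf a ≠ p ^ 2) := by
  have key : ∀ a : M →₀ ℤ, addOrderOf a ≠ p ^ 2 := by
    intro a h
    have h0 : (p ^ 2) • a = 0 := by rw [← h]; exact addOrderOf_nsmul_eq_zero a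
    have hp2 : p ^ 2 ≠ 0 := pow_ne_zero 2 hp.ne_zero
    have ha : a = 0 := by
      ext m
      have h1 := DFunLike.congr_fun h0 m
      simp only [Finsupp.smul_apply, Finsupp.coe_zero, Pi.zero_apply, smul_eq_zero] at h1
      exact h1.resolve_left hp2
    rw [ha, addOrderOf_zero] at h
    have := Nat.one_lt_pow (n := 2) (by norm_num) hp.one_lt
    omega
  refine ⟨M →₀ ℤ, inferInstance, (Finsupp.linearCombination ℤ (id : M → M)).toAddMonoidHom,
    ?_, key, fun a _ => key a⟩
  intro m
  exact ⟨Finsupp.single m 1, by simp⟩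
end
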